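/- (Exterior solvability with decay for linear elasticity.) Let d ≥ 2, N ≥ 1, and let ℂ = (ℂ_{iajb}) ∈ ℝ^{N×d×N×d} satisfy the symmetry ℂ_{iajb} = ℂ_{jbia} and the Legendre–Hadamard condition ∑_{i,a,j,b} ℂ_{iajb} ξ_i η_a ξ_j η_b ≥ c₀|ξ|²|η|² for all ξ ∈ ℝ^N, η ∈ ℝ^d, with some c₀ > 0. Let p, α ∈ ℕ₀, R₀ > 0, and let f ∈ C^∞(ℝ^d∖B_{R₀/2}(0); ℝ^N) satisfy, for every j ∈ ℕ₀, |∇^j f(x)| ≤ C_j⟨x⟩^{−d−p−j}(log⟨x⟩)^α for all |x| ≥ R₀/2. Then there exist u ∈ C^∞(ℝ^d∖B_{R₀}(0); ℝ^N) and constants C̃_j such that −∑_{a,b,j} ℂ_{iajb} ∂_a∂_b u_j(x) = f_i(x) for all x with |x| ≥ R₀ and all i, and for every j ≥ 1, |∇^j u(x)| ≤ C̃_j⟨x⟩^{2−d−p−j}(log⟨x⟩)^{α+1} for all |x| ≥ R₀. -/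

import Mathlib

noncomputable section

open scoped BigOperators
open MeasureTheory Filter Topology

namespace Defect

abbrev Vec (n : ℕ) : Type := Fin n → ℝ

/-- Euclidean norm of a vector in `ℝ^n`. -/
def enorm {n : ℕ} (v : Vec n) : ℝ := Real.sqrt (∑ i, (v i) ^ 2)

/-- `⟨x⟩ := |x| + 2`. -/
def ang {n : ℕ} (v : Vec n) : ℝ := enorm v + 2

def dotV {n : ℕ} (x y : Vec n) : ℝ := ∑ i, x i * y i

/-- Matrix-vector product for a plain `Fin N → Fin N → ℝ` matrix. -/
def mulV {N : ℕ} (M : Fin N → Fin N → ℝ) (v : Vec N) : Vec N := fun i => ∑ j, M i j * v j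

/-- Euclidean (Frobenius) norm of an `N × N` array. -/
def mnorm {N : ℕ} (M : Fin N → Fin N → ℝ) : ℝ := Real.sqrt (∑ i, ∑ j, (M i j) ^ 2)

/-- The lattice point `A z` for `z ∈ ℤ^d`. -/
def latticePt (d : ℕ) (A : Matrix (Fin d) (Fin d) ℝ) (z : Fin d → ℤ) : Vec d :=
  fun i => ∑ j, A i j * (z j : ℝ)

/-- The Bravais lattice `Λ = A ℤ^d`. -/
def Lattice (d : ℕ) (A : Matrix (Fin d) (Fin d) ℝ) : Set (Vec d) :=
  Set.range (latticePt d A)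

/-- First-order finite difference `D_ρ u (ℓ) = u(ℓ+ρ) - u(ℓ)`. -/
def D1 {d : ℕ} {M : Type} [AddCommGroup M] (ρ : Vec d) (u : Vec d → M) (ℓ : Vec d) : M :=
  u (ℓ + ρ) - u ℓ

/-- Iterated finite difference `D_{ρ₁} ⋯ D_{ρ_j} u (ℓ)` (closed form). -/
def Dmulti {d : ℕ} {M : Type} [AddCommGroup M] [Module ℝ M] {j : ℕ}
    (ρs : Fin j → Vec d) (u : Vec d → M) (ℓ : Vec d) : M :=
  ∑ S : Finset (Fin j), ((-1 : ℝ) ^ (j - S.card)) • u (ℓ + ∑ i ∈ S, ρs i)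

/-- `|Du(ℓ)|²`, the squared Euclidean norm of the stencil of first differences. -/
def Dnorm1Sq {d N : ℕ} (R : Finset (Vec d)) (u : Vec d → Vec N) (ℓ : Vec d) : ℝ :=
  ∑ ρ ∈ R, (enorm (D1 ρ u ℓ)) ^ 2

/-- `|D^j u(ℓ)|`, the Euclidean norm of the array `(D_{ρ⃗} u(ℓ))_{ρ⃗ ∈ R^j}`. -/
def DnormJ {d N : ℕ} (R : Finset (Vec d)) (j : ℕ) (u : Vec d → Vec N) (ℓ : Vec d) : ℝ :=
  Real.sqrt (∑ ρs : Fin j → {x // x ∈ R},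
    (enorm (Dmulti (fun i => (ρs i : Vec d)) u ℓ)) ^ 2)

/-- The linearized lattice operator
`H[u](ℓ) = ∑_{σ,ρ∈R} (C_{σρ} D_ρ u(ℓ-σ) - C_{σρ} D_ρ u(ℓ))`. -/
def Hop (d N : ℕ) (R : Finset (Vec d)) (C : Vec d → Vec d → Fin N → Fin N → ℝ)
    (u : Vec d → Vec N) (ℓ : Vec d) : Vec N :=
  ∑ σ ∈ R, ∑ ρ ∈ R, (mulV (C σ ρ) (D1 ρ u (ℓ - σ)) - mulV (C σ ρ) (D1 ρ u ℓ))

/-- `u ∈ 𝓗¹`. -/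
def InH1 {d N : ℕ} (A : Matrix (Fin d) (Fin d) ℝ) (R : Finset (Vec d))
    (u : Vec d → Vec N) : Prop :=
  Summable fun z : Fin d → ℤ => Dnorm1Sq R u (latticePt d A z)

/-- `u ∈ 𝓗ᶜ` : the stencil `Du` has bounded support on the lattice. -/
def InHc {d N : ℕ} (A : Matrix (Fin d) (Fin d) ℝ) (R : Finset (Vec d))
    (u : Vec d → Vec N) : Prop :=
  ∃ rad : ℝ, ∀ z : Fin d → ℤ, rad ≤ enorm (latticePt d A z) →
    ∀ ρ ∈ R, D1 ρ u (latticePt d A z) = 0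

/-- Stability of the lattice operator `H`. -/
def IsStable (d N : ℕ) (A : Matrix (Fin d) (Fin d) ℝ) (R : Finset (Vec d))
    (C : Vec d → Vec d → Fin N → Fin N → ℝ) : Prop :=
  ∃ c₀ : ℝ, 0 < c₀ ∧ ∀ u : Vec d → Vec N, InHc A R u →
    c₀ * (∑' z : Fin d → ℤ, Dnorm1Sq R u (latticePt d A z)) ≤
      ∑' z : Fin d → ℤ, ∑ σ ∈ R, ∑ ρ ∈ R,
        dotV (D1 σ u (latticePt d A z)) (mulV (C σ ρ) (D1 ρ u (latticePt d A z)))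

/-- `k`-th column of a matrix-valued function. -/
def col {d N : ℕ} (G : Vec d → Fin N → Fin N → ℝ) (k : Fin N) : Vec d → Vec N :=
  fun x i => G x i k

/-- `|D^j 𝒢(ℓ)|` for matrix-valued `𝒢`. -/
def DnormJmat {d N : ℕ} (R : Finset (Vec d)) (j : ℕ)
    (G : Vec d → Fin N → Fin N → ℝ) (ℓ : Vec d) : ℝ :=
  Real.sqrt (∑ k : Fin N, (DnormJ R j (col G k) ℓ) ^ 2)

/-- `𝒢` is a lattice Green's function for `H`. -/
def IsLatticeGreen (d N : ℕ) (A : Matrix (Fin d) (Fin d) ℝ) (R : Finset (Vec d))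
    (C : Vec d → Vec d → Fin N → Fin N → ℝ) (G : Vec d → Fin N → Fin N → ℝ) : Prop :=
  (∀ (k : Fin N) (z : Fin d → ℤ),
      Hop d N R C (col G k) (latticePt d A z) =
        if latticePt d A z = 0 then Pi.single k 1 else 0) ∧
  (∀ j : ℕ, 1 ≤ j → ∃ cj : ℝ, ∀ z : Fin d → ℤ,
      DnormJmat R j G (latticePt d A z) ≤
        cj * ang (latticePt d A z) ^ ((2 : ℝ) - d - j))

/-- A symmetric array `b ∈ (ℝ^{Fin d})^{⊙ i}`. -/
def SymArr {d i : ℕ} (b : (Fin i → Fin d) → ℝ) : Prop :=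
  ∀ (π : Equiv.Perm (Fin i)) (σv : Fin i → Fin d), b (σv ∘ π) = b σv

/-- `b : D_𝒮^i f`, a multipole term built from the basis `s`. -/
def multipole (d N : ℕ) (s : Fin d → Vec d) (i : ℕ) (b : (Fin i → Fin d) → ℝ)
    (f : Vec d → Vec N) : Vec d → Vec N :=
  fun ℓ => ∑ σv : Fin i → Fin d, b σv • Dmulti (fun m => s (σv m)) f ℓ

/-- Iterated partial derivative `∂_{j₁} ⋯ ∂_{j_i} f (x)`. -/
def pderivMulti {d : ℕ} (i : ℕ) (js : Fin i → Fin d) (f : Vec d → ℝ) (x : Vec d) : ℝ :=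
  iteratedFDeriv ℝ i f x (fun m => Pi.single (js m) (1 : ℝ))

/-- `a : ∇^i f (x)` for a tensor `a ∈ (ℝ^d)^{⊗ i}`. -/
def aContract {d : ℕ} (i : ℕ) (a : (Fin i → Fin d) → ℝ) (f : Vec d → ℝ) (x : Vec d) : ℝ :=
  ∑ js : Fin i → Fin d, a js * pderivMulti i js f x

/-- Elementary tensor `σ⃗^⊗` as an array. -/
def tensorPow {d k : ℕ} (σs : Fin k → Vec d) : (Fin k → Fin d) → ℝ :=
  fun js => ∏ m, σs m (js m)

/-- Symmetric tensor product `σ⃗^⊙`. -/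
def symTensor {d k : ℕ} (σs : Fin k → Vec d) : (Fin k → Fin d) → ℝ :=
  fun js => ((k.factorial : ℝ))⁻¹ * ∑ π : Equiv.Perm (Fin k), tensorPow (σs ∘ π) js

/-- A symmetric tensor (array invariant under index permutations). -/
def SymTensor {d k : ℕ} (T : (Fin k → Fin d) → ℝ) : Prop :=
  ∀ (π : Equiv.Perm (Fin k)) (js : Fin k → Fin d), T (js ∘ π) = T js

/-- `∂V/∂g_ρ (gs)` as a vector in `ℝ^N`. -/
def gradV {d N : ℕ} (R : Finset (Vec d)) (V : ({x // x ∈ R} → Vec N) → ℝ)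
    (ρ : {x // x ∈ R}) (gs : {x // x ∈ R} → Vec N) : Vec N :=
  fun i => fderiv ℝ V gs (Pi.single ρ (Pi.single i 1))

/-- The finite-difference stencil `Du(ℓ) = (D_ρ u(ℓ))_{ρ ∈ R}`. -/
def Dstencil {d N : ℕ} (R : Finset (Vec d)) (u : Vec d → Vec N) (ℓ : Vec d) :
    {x // x ∈ R} → Vec N :=
  fun ρ => D1 (ρ : Vec d) u ℓ

/-- `C_{σρ} = ∂²V/∂g_σ ∂g_ρ (0)`. -/
def CofV {d N : ℕ} (R : Finset (Vec d)) (V : ({x // x ∈ R} → Vec N) → ℝ)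
    (σ ρ : Vec d) (i j : Fin N) : ℝ :=
  if hσ : σ ∈ R then
    if hρ : ρ ∈ R then
      iteratedFDeriv ℝ 2 V 0
        ![Pi.single ⟨σ, hσ⟩ (Pi.single i 1), Pi.single ⟨ρ, hρ⟩ (Pi.single j 1)]
    else 0
  else 0

/-- Summand of the first variation `δE(u)[v]` at a site. -/
def deltaEsite {d N : ℕ} (R : Finset (Vec d)) (V : ({x // x ∈ R} → Vec N) → ℝ)
    (u v : Vec d → Vec N) (ℓ : Vec d) : ℝ :=
  ∑ ρ ∈ R.attach, dotV (gradV R V ρ (Dstencil R u ℓ)) (D1 (ρ : Vec d) v ℓ)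

/-- The pointwise atomistic force `δE(u)(ℓ)`. -/
def deltaEpt {d N : ℕ} (R : Finset (Vec d)) (V : ({x // x ∈ R} → Vec N) → ℝ)
    (u : Vec d → Vec N) (ℓ : Vec d) : Vec N :=
  ∑ ρ ∈ R.attach,
    (gradV R V ρ (Dstencil R u (ℓ - (ρ : Vec d))) - gradV R V ρ (Dstencil R u ℓ))

/-- Point symmetry of the site potential. -/
def PointSym {d N : ℕ} (R : Finset (Vec d)) (hRsym : ∀ ρ ∈ R, -ρ ∈ R)
    (V : ({x // x ∈ R} → Vec N) → ℝ) : Prop :=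
  ∀ gs : {x // x ∈ R} → Vec N,
    V (fun ρ => -(gs ⟨-(ρ : Vec d), hRsym _ ρ.2⟩)) = V gs

/-- The Cauchy–Born elasticity tensor `ℂ_{iajb}`. -/
def CB {d N : ℕ} (A : Matrix (Fin d) (Fin d) ℝ) (R : Finset (Vec d))
    (C : Vec d → Vec d → Fin N → Fin N → ℝ)
    (i : Fin N) (a : Fin d) (j : Fin N) (b : Fin d) : ℝ :=
  (|A.det|)⁻¹ * ∑ ρ ∈ R, ∑ σ ∈ R, C ρ σ i j * ρ a * σ b

/-- Directional derivative. -/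
def pd {E : Type*} [NormedAddCommGroup E] [NormedSpace ℝ E] (v : E) (f : E → ℝ) : E → ℝ :=
  fun x => fderiv ℝ f x v

section calc_basics
variable {E : Type*} [NormedAddCommGroup E] [NormedSpace ℝ E]

theorem pd_contDiff {f : E → ℝ} (hf : ContDiff ℝ (⊤ : ℕ∞) f) (v : E) :
    ContDiff ℝ (⊤ : ℕ∞) (pd v f) := by
  unfold pd
  exact (hf.fderiv_right (m := (⊤ : ℕ∞)) (by norm_cast)).clm_apply contDiff_const

theorem pd_pd_eq {f : E → ℝ} (hf : ContDiff ℝ (⊤ : ℕ∞) f) (v w : E) (x : E) :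
    pd v (pd w f) x = fderiv ℝ (fderiv ℝ f) x v w := by
  have h1 : Differentiable ℝ (fderiv ℝ f) :=
    (hf.fderiv_right (m := (⊤ : ℕ∞)) (by norm_cast)).differentiable (by norm_num)
  unfold pd
  rw [fderiv_clm_apply h1.differentiableAt (differentiableAt_const _)]
  simp

theorem pd_pd_eq_iter {f : E → ℝ} (hf : ContDiff ℝ (⊤ : ℕ∞) f) (v w : E) (x : E) :
    pd v (pd w f) x = iteratedFDeriv ℝ 2 f x ![v, w] := by
  rw [pd_pd_eq hf, iteratedFDeriv_two_apply]; simp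

theorem pd_comm {f : E → ℝ} (hf : ContDiff ℝ (⊤ : ℕ∞) f) (v w : E) :
    pd v (pd w f) = pd w (pd v f) := by
  funext x
  rw [pd_pd_eq hf, pd_pd_eq hf]
  have := (hf.contDiffAt (x := x)).isSymmSndFDerivAt (by
    rw [minSmoothness_of_isRCLikeNormedField]; exact WithTop.coe_le_coe.2 le_top)
  exact this v w

theorem norm_iter_pd_le {f : E → ℝ} (hf : ContDiff ℝ (⊤ : ℕ∞) f) (v : E) (n : ℕ) (x : E) :
    ‖iteratedFDeriv ℝ n (pd v f) x‖ ≤ ‖v‖ * ‖iteratedFDeriv ℝ (n+1) f x‖ := by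
  have h1 : ContDiff ℝ (⊤ : ℕ∞) (fderiv ℝ f) := hf.fderiv_right (m := (⊤ : ℕ∞)) (by norm_cast)
  have : pd v f = (ContinuousLinearMap.apply ℝ ℝ v) ∘ (fderiv ℝ f) := by
    funext y; simp [pd]
  rw [this, ContinuousLinearMap.iteratedFDeriv_comp_left _ (h1.contDiffAt) (by exact_mod_cast le_top),
    ← norm_iteratedFDeriv_fderiv]
  refine (ContinuousLinearMap.norm_compContinuousMultilinearMap_le _ _).trans ?_
  gcongr
  refine ContinuousLinearMap.opNorm_le_bound _ (norm_nonneg _) fun L => ?_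
  simpa [mul_comm] using L.le_opNorm v

/-- Scale-weighted product rule. -/
theorem prod_bound {f g : E → ℝ} (hf : ContDiff ℝ (⊤ : ℕ∞) f) (hg : ContDiff ℝ (⊤ : ℕ∞) g)
    {x : E} {n : ℕ} {A B w : ℝ} (hA : 0 ≤ A) (hw : 0 < w)
    (h1 : ∀ i ≤ n, ‖iteratedFDeriv ℝ i f x‖ ≤ A / w ^ i)
    (h2 : ∀ i ≤ n, ‖iteratedFDeriv ℝ i g x‖ ≤ B / w ^ i) :
    ‖iteratedFDeriv ℝ n (fun y => f y * g y) x‖ ≤ 2 ^ n * A * B / w ^ n := by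
  have hB : 0 ≤ B := by
    have := (norm_nonneg _).trans (h2 0 (Nat.zero_le _)); simpa using this
  refine (norm_iteratedFDeriv_mul_le (N := (⊤ : ℕ∞)) hf hg x (by exact_mod_cast le_top)).trans ?_
  have : ∀ i ∈ Finset.range (n+1), (n.choose i : ℝ) * ‖iteratedFDeriv ℝ i f x‖ *
      ‖iteratedFDeriv ℝ (n - i) g x‖ ≤ (n.choose i : ℝ) * (A * B / w ^ n) := by
    intro i hi
    have hi' : i ≤ n := by simpa [Nat.lt_succ_iff] using hi
    rw [mul_assoc]
    gcongr
    calc _ ≤ (A / w ^ i) * (B / w ^ (n - i)) :=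
          mul_le_mul (h1 i hi') (h2 _ (Nat.sub_le _ _)) (norm_nonneg _) (by positivity)
      _ = A * B / w ^ n := by
          rw [div_mul_div_comm, ← pow_add]; congr 3; omega
  refine (Finset.sum_le_sum this).trans (le_of_eq ?_)
  rw [← Finset.sum_mul]
  have : (∑ i ∈ Finset.range (n+1), (n.choose i : ℝ)) = 2 ^ n := by
    exact_mod_cast Nat.sum_range_choose n
  rw [this]; ring

/-- Termwise differentiation of a series normalised at `0`. -/
theorem series_lemma {f : ℕ → E → ℝ} (hf : ∀ k, ContDiff ℝ (⊤ : ℕ∞) (f k))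
    (h0 : ∀ k, f k 0 = 0) (b : ℕ → ℕ → ℝ) (hb : ∀ n, 1 ≤ n → Summable (b n))
    (hfb : ∀ n, 1 ≤ n → ∀ k x, ‖iteratedFDeriv ℝ n (f k) x‖ ≤ b n k) :
    ContDiff ℝ (⊤ : ℕ∞) (fun x => ∑' k, f k x) ∧
    (∀ n, 1 ≤ n → ∀ x, ‖iteratedFDeriv ℝ n (fun x => ∑' k, f k x) x‖ ≤
      ∑' k, ‖iteratedFDeriv ℝ n (f k) x‖) ∧
    (∀ v w x, HasSum (fun k => pd v (pd w (f k)) x) (pd v (pd w (fun x => ∑' k, f k x)) x)) := by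
  have hd : ∀ k, ContDiff ℝ (⊤ : ℕ∞) (fderiv ℝ (f k)) := fun k =>
    (hf k).fderiv_right (m := (⊤ : ℕ∞)) (by norm_cast)
  have hdiff : ∀ k, Differentiable ℝ (f k) := fun k => (hf k).differentiable (by norm_num)
  have hb1 : ∀ k x, ‖fderiv ℝ (f k) x‖ ≤ b 1 k := by
    intro k x
    have := hfb 1 le_rfl k x
    rw [← norm_iteratedFDeriv_fderiv, norm_iteratedFDeriv_zero] at this
    exact this
  have hs0 : Summable fun k => f k 0 := by simp [h0, summable_zero]
  have hfd : (fderiv ℝ fun x => ∑' k, f k x) = fun x => ∑' k, fderiv ℝ (f k) x :=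
    fderiv_tsum (hb 1 le_rfl) hdiff hb1 hs0
  have hbn : ∀ (n : ℕ) (k : ℕ) (x : E), ‖iteratedFDeriv ℝ n (fderiv ℝ (f k)) x‖ ≤ b (n+1) k := by
    intro n k x
    rw [norm_iteratedFDeriv_fderiv]; exact hfb _ (by omega) k x
  have hc : ContDiff ℝ (⊤ : ℕ∞) (fun x => ∑' k, fderiv ℝ (f k) x) :=
    contDiff_tsum (v := fun n k => b (n+1) k) hd (fun n _ => hb (n+1) (by omega))
      (fun n k x _ => hbn n k x)
  have hC : ContDiff ℝ (⊤ : ℕ∞) (fun x => ∑' k, f k x) := by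
    rw [contDiff_infty_iff_fderiv]
    refine ⟨fun x => (hasFDerivAt_tsum (hb 1 le_rfl) (fun k x => (hdiff k x).hasFDerivAt) hb1 hs0 x).differentiableAt, ?_⟩
    rw [hfd]; exact hc
  refine ⟨hC, ?_, ?_⟩
  · intro n hn x
    obtain ⟨n, rfl⟩ : ∃ m, n = m + 1 := ⟨n - 1, by omega⟩
    rw [← norm_iteratedFDeriv_fderiv, hfd,
      iteratedFDeriv_tsum_apply (v := fun n k => b (n+1) k) hd (fun n _ => hb (n+1) (by omega))
      (fun n k x _ => hbn n k x) (N := (⊤ : ℕ∞)) le_top]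
    simp_rw [← norm_iteratedFDeriv_fderiv (n := n)]
    apply norm_tsum_le_tsum_norm
    exact Summable.of_nonneg_of_le (fun _ => norm_nonneg _) (fun k => hbn n k x) (hb (n+1) (by omega))
  · intro v w x
    have hp : pd w (fun x => ∑' k, f k x) = fun y => ∑' k, pd w (f k) y := by
      funext y
      have hs : Summable fun k => fderiv ℝ (f k) y :=
        Summable.of_norm_bounded (hb 1 le_rfl) (fun k => hb1 k y)
      have h3 := hs.hasSum.mapL (ContinuousLinearMap.apply ℝ ℝ w)
      unfold pd
      rw [hfd]
      exact h3.tsum_eq.symm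
    have hpw : ∀ k x, ‖fderiv ℝ (pd w (f k)) x‖ ≤ ‖w‖ * b 2 k := by
      intro k x
      have h4 := norm_iter_pd_le (hf k) w 1 x
      rw [← norm_iteratedFDeriv_fderiv, norm_iteratedFDeriv_zero] at h4
      exact h4.trans (mul_le_mul_of_nonneg_left (hfb 2 (by norm_num) k x) (norm_nonneg _))
    have hsw : Summable fun k => ‖w‖ * b 2 k := (hb 2 (by norm_num)).mul_left _
    have hs0' : Summable fun k => pd w (f k) 0 := by
      have hs : Summable fun k => fderiv ℝ (f k) 0 :=
        Summable.of_norm_bounded (hb 1 le_rfl) (fun k => hb1 k 0)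
      exact (hs.hasSum.mapL (ContinuousLinearMap.apply ℝ ℝ w)).summable
    have h5 := hasFDerivAt_tsum (f := fun k => pd w (f k))
      (f' := fun k => fderiv ℝ (pd w (f k))) hsw
      (fun k x => ((pd_contDiff (hf k) w).differentiable (by norm_num) x).hasFDerivAt) hpw hs0' x
    have hs6 : Summable fun k => fderiv ℝ (pd w (f k)) x :=
      Summable.of_norm_bounded hsw (fun k => hpw k x)
    have h7 := hs6.hasSum.mapL (ContinuousLinearMap.apply ℝ ℝ v)
    rw [hp]
    have h8 : pd v (fun y => ∑' k, pd w (f k) y) x =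
        (ContinuousLinearMap.apply ℝ ℝ v) (∑' k, fderiv ℝ (pd w (f k)) x) := by
      simp only [pd] at h5 ⊢
      rw [h5.fderiv]; rfl
    rw [h8]
    exact h7

end calc_basics

section param
variable {E T : Type*} [NormedAddCommGroup E] [NormedSpace ℝ E]
  [NormedAddCommGroup T] [NormedSpace ℝ T]

theorem joint_iter {f : T → E → ℝ} (hf : ContDiff ℝ (⊤ : ℕ∞) (Function.uncurry f)) (n : ℕ) :
    ContDiff ℝ (⊤ : ℕ∞) (fun p : T × E => iteratedFDeriv ℝ n (f p.1) p.2) := by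
  induction n with
  | zero =>
    simp_rw [iteratedFDeriv_zero_eq_comp]
    exact ((continuousMultilinearCurryFin0 ℝ E ℝ).symm.contDiff).comp hf
  | succ n ih =>
    simp_rw [iteratedFDeriv_succ_eq_comp_left]
    have h1 := ContDiff.fderiv (f := fun (p : T × E) (x : E) => iteratedFDeriv ℝ n (f p.1) x)
      (g := fun p : T × E => p.2) (n := (⊤ : ℕ∞)) (m := (⊤ : ℕ∞))
      (ih.comp (contDiff_fst.fst.prodMk contDiff_snd)) contDiff_snd (by norm_cast)
    have h2 := (LinearIsometryEquiv.contDiff (n := (⊤ : ℕ∞)) (𝕜 := ℝ) (E := E →L[ℝ] (E [×n]→L[ℝ] ℝ))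
        (F := E [×(n+1)]→L[ℝ] ℝ) (continuousMultilinearCurryLeftEquiv ℝ
          (fun _ : Fin (n+1) => E) ℝ).symm)
    exact h2.comp h1

variable [MeasurableSpace T] [BorelSpace T] [SecondCountableTopology T]

theorem integral_lemma {f : T → E → ℝ} (hf : ContDiff ℝ (⊤ : ℕ∞) (Function.uncurry f))
    {μ : Measure T} (b : ℕ → T → ℝ) (hb : ∀ n, Integrable (b n) μ)
    (hfb : ∀ n, ∀ᵐ t ∂μ, ∀ x, ‖iteratedFDeriv ℝ n (f t) x‖ ≤ b n t) :
    ContDiff ℝ (⊤ : ℕ∞) (fun x => ∫ t, f t x ∂μ) ∧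
    ∀ n x, iteratedFDeriv ℝ n (fun x => ∫ t, f t x ∂μ) x = ∫ t, iteratedFDeriv ℝ n (f t) x ∂μ := by
  have hft : ∀ t, ContDiff ℝ (⊤ : ℕ∞) (f t) := fun t =>
    hf.comp (contDiff_const.prodMk contDiff_id)
  have hmeas : ∀ n x, AEStronglyMeasurable (fun t => iteratedFDeriv ℝ n (f t) x) μ := by
    intro n x
    have : Continuous (fun t => iteratedFDeriv ℝ n (f t) x) :=
      (joint_iter hf n).continuous.comp (continuous_id.prodMk continuous_const)
    exact this.aestronglyMeasurable
  have hdiffn : ∀ n t, Differentiable ℝ (iteratedFDeriv ℝ n (f t)) := fun n t =>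
    (hft t).differentiable_iteratedFDeriv (by exact_mod_cast WithTop.coe_lt_top n)
  have hIntg : ∀ n x, Integrable (fun t => iteratedFDeriv ℝ n (f t) x) μ := fun n x =>
    (hb n).mono' (hmeas n x) ((hfb n).mono fun t ht => ht x)
  have hfdm : ∀ n x, AEStronglyMeasurable (fun t => fderiv ℝ (iteratedFDeriv ℝ n (f t)) x) μ := by
    intro n x
    have h := ContDiff.fderiv (f := fun (t : T) (x : E) => iteratedFDeriv ℝ n (f t) x)
      (g := fun t : T => x) (n := (⊤ : ℕ∞)) (m := (⊤ : ℕ∞))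
      (joint_iter hf n) contDiff_const (by norm_cast)
    exact h.continuous.aestronglyMeasurable
  have key : ∀ n x, HasFDerivAt (fun x => ∫ t, iteratedFDeriv ℝ n (f t) x ∂μ)
      (∫ t, fderiv ℝ (iteratedFDeriv ℝ n (f t)) x ∂μ) x := by
    intro n x
    refine hasFDerivAt_integral_of_dominated_of_fderiv_le (s := Set.univ) (bound := b (n+1))
      (F := fun y t => iteratedFDeriv ℝ n (f t) y)
      (F' := fun y t => fderiv ℝ (iteratedFDeriv ℝ n (f t)) y)
      univ_mem (Eventually.of_forall fun y => hmeas n y) (hIntg n x) (hfdm n x) ?_ (hb (n+1)) ?_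
    · filter_upwards [hfb (n+1)] with t ht y _
      rw [norm_fderiv_iteratedFDeriv]; exact ht y
    · exact Eventually.of_forall fun t y _ => (hdiffn n t y).hasFDerivAt
  have main : ∀ n, iteratedFDeriv ℝ n (fun x => ∫ t, f t x ∂μ) =
      fun x => ∫ t, iteratedFDeriv ℝ n (f t) x ∂μ := by
    intro n
    induction n with
    | zero =>
      funext x
      simp_rw [iteratedFDeriv_zero_eq_comp, Function.comp_apply]
      exact ((continuousMultilinearCurryFin0 ℝ E ℝ).symm.toContinuousLinearEquiv.integral_comp_comm _).symm
    | succ n ih =>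
      funext x
      simp_rw [iteratedFDeriv_succ_eq_comp_left, Function.comp_apply]
      rw [ih, (key n x).fderiv]
      exact (ContinuousLinearEquiv.integral_comp_comm (𝕜 := ℝ) (E := E →L[ℝ] (E [×n]→L[ℝ] ℝ))
        (F := E [×(n+1)]→L[ℝ] ℝ) (continuousMultilinearCurryLeftEquiv ℝ
          (fun _ : Fin (n+1) => E) ℝ).symm.toContinuousLinearEquiv
        (fun t => fderiv ℝ (iteratedFDeriv ℝ n (f t)) x)).symm
  refine ⟨contDiff_of_differentiable_iteratedFDeriv fun m _ => ?_, fun n x => by rw [main]⟩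
  rw [main m]
  exact fun x => (key m x).differentiableAt

end param


/-- Smooth with rapidly decaying derivatives. -/
def RD {E : Type*} [NormedAddCommGroup E] [NormedSpace ℝ E] (g : E → ℝ) : Prop :=
  ContDiff ℝ (⊤ : ℕ∞) g ∧ ∀ n K : ℕ, ∃ C : ℝ, ∀ w, (1 + ‖w‖) ^ K * ‖iteratedFDeriv ℝ n g w‖ ≤ C

section kernel
open scoped FourierTransform LineDeriv SchwartzMap

theorem RD_of_schwartz {E : Type*} [NormedAddCommGroup E] [NormedSpace ℝ E] (f : 𝓢(E, ℂ)) :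
    RD (fun x => (f x).re) := by
  have h : (fun x => (f x).re) = (SchwartzMap.postcompCLM Complex.reCLM f : 𝓢(E, ℝ)) := by
    funext x; simp
  rw [h]
  refine ⟨SchwartzMap.smooth _ _, fun n K => ⟨_, fun w =>
    SchwartzMap.one_add_le_sup_seminorm_apply (𝕜 := ℝ) (m := (K, n)) le_rfl le_rfl _ w⟩⟩

theorem pd_re_schwartz {E : Type*} [NormedAddCommGroup E] [NormedSpace ℝ E] (f : 𝓢(E, ℂ)) (v : E) :
    pd v (fun x => (f x).re) = fun x => ((∂_{v} f) x).re := by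
  funext x
  unfold pd
  rw [SchwartzMap.lineDerivOp_apply_eq_fderiv]
  have := (Complex.reCLM.hasFDerivAt.comp x (f.differentiableAt (x := x)).hasFDerivAt).fderiv
  have h2 : (fun x => (f x).re) = Complex.reCLM ∘ f := rfl
  rw [h2, this]; rfl

variable {d N : ℕ}

theorem det_contDiff {E : Type*} [NormedAddCommGroup E] [NormedSpace ℝ E]
    (M : E → Matrix (Fin N) (Fin N) ℝ) (h : ∀ i j, ContDiff ℝ (⊤ : ℕ∞) (fun x => M x i j)) :
    ContDiff ℝ (⊤ : ℕ∞) (fun x => (M x).det) := by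
  simp_rw [Matrix.det_apply]
  refine ContDiff.sum fun σ _ => ContDiff.const_smul _ ?_
  exact contDiff_prod fun i _ => h _ _

theorem adj_contDiff {E : Type*} [NormedAddCommGroup E] [NormedSpace ℝ E]
    (M : E → Matrix (Fin N) (Fin N) ℝ) (h : ∀ i j, ContDiff ℝ (⊤ : ℕ∞) (fun x => M x i j))
    (i j : Fin N) :
    ContDiff ℝ (⊤ : ℕ∞) (fun x => (M x).adjugate i j) := by
  simp_rw [Matrix.adjugate_apply]
  refine det_contDiff _ fun k l => ?_
  by_cases hk : k = j
  · subst hk; simp; exact contDiff_const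
  · simp [Matrix.updateRow_ne hk]; exact h _ _

/-- The symbol of the operator. -/
def symb (C : Fin N → Fin d → Fin N → Fin d → ℝ) (ξ : EuclideanSpace ℝ (Fin d)) :
    Matrix (Fin N) (Fin N) ℝ :=
  Matrix.of fun i j => ∑ a, ∑ b, C i a j b * ξ a * ξ b

theorem symb_contDiff (C : Fin N → Fin d → Fin N → Fin d → ℝ) (i j : Fin N) :
    ContDiff ℝ (⊤ : ℕ∞) (fun ξ => symb C ξ i j) := by
  simp only [symb, Matrix.of_apply]
  have : ∀ a : Fin d, ContDiff ℝ (⊤ : ℕ∞) (fun ξ : EuclideanSpace ℝ (Fin d) => ξ a) := fun a =>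
    (EuclideanSpace.proj (𝕜 := ℝ) a).contDiff
  exact ContDiff.sum fun a _ => ContDiff.sum fun b _ => (contDiff_const.mul (this a)).mul (this b)

theorem symb_det (C : Fin N → Fin d → Fin N → Fin d → ℝ)
    (hLH : ∀ (ξ : Fin N → ℝ) (η : Fin d → ℝ), ξ ≠ 0 → η ≠ 0 →
      0 < ∑ i, ∑ a, ∑ j, ∑ b, C i a j b * ξ i * η a * ξ j * η b)
    (η : EuclideanSpace ℝ (Fin d)) (hη : η ≠ 0) : (symb C η).det ≠ 0 := by
  intro h
  obtain ⟨v, hv, hAv⟩ := Matrix.exists_mulVec_eq_zero_iff.2 h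
  have h1 := hLH v (fun a => η a) hv (by
    intro h0; apply hη; ext a; exact congrFun h0 a)
  have h2 : ∑ i, ∑ a, ∑ j, ∑ b, C i a j b * v i * η a * v j * η b =
      ∑ i, v i * (Matrix.mulVec (symb C η) v) i := by
    refine Finset.sum_congr rfl fun i _ => ?_
    simp only [Matrix.mulVec, dotProduct, symb, Matrix.of_apply, Finset.mul_sum, Finset.sum_mul]
    rw [Finset.sum_comm]
    refine Finset.sum_congr rfl fun j _ => Finset.sum_congr rfl fun a _ => Finset.sum_congr rfl fun b _ => ?_
    ring
  rw [h2, hAv] at h1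
  simp at h1

theorem inner_single_eq (ξ : EuclideanSpace ℝ (Fin d)) (c : Fin d) :
    inner ℝ ξ (EuclideanSpace.single c (1:ℝ)) = ξ c := by
  rw [EuclideanSpace.inner_single_right]; simp

theorem kernel_exists (C : Fin N → Fin d → Fin N → Fin d → ℝ)
    (hLH : ∀ (ξ : Fin N → ℝ) (η : Fin d → ℝ), ξ ≠ 0 → η ≠ 0 →
      0 < ∑ i, ∑ a, ∑ j, ∑ b, C i a j b * ξ i * η a * ξ j * η b) :
    ∃ (g : Fin N → Fin N → EuclideanSpace ℝ (Fin d) → ℝ) (φ : EuclideanSpace ℝ (Fin d) → ℝ),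
      (∀ i j, RD (g i j)) ∧ RD φ ∧ ∫ x, φ x = 1 ∧
      ∀ i m x, -(∑ a, ∑ j, ∑ b, C i a j b *
        pd (EuclideanSpace.single a 1) (pd (EuclideanSpace.single b 1) (g j m)) x) =
        if i = m then 2 ^ d * φ ((2:ℝ) • x) - φ x else 0 := by
  let E := EuclideanSpace ℝ (Fin d)
  let χ : ContDiffBump (0 : E) := ⟨1, 2, one_pos, one_lt_two⟩
  have hχs : ContDiff ℝ (⊤ : ℕ∞) (fun x : E => χ x) := χ.contDiff
  let χb : E → ℝ := fun x => χ ((1/2 : ℝ) • x)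
  have hχbs : ContDiff ℝ (⊤ : ℕ∞) χb := hχs.comp (contDiff_const_smul _)
  have hχbc : HasCompactSupport χb := χ.hasCompactSupport.comp_smul (by norm_num)
  let ψ : E → ℝ := fun x => χb x - χ x
  have hψs : ContDiff ℝ (⊤ : ℕ∞) ψ := hχbs.sub hχs
  have hψc : HasCompactSupport ψ := hχbc.sub χ.hasCompactSupport
  have hψ0 : ∀ x : E, ‖x‖ ≤ 1 → ψ x = 0 := by
    intro x hx
    have h1 : χ x = 1 := χ.one_of_mem_closedBall (by simpa using hx)
    have h2 : χ ((1/2:ℝ) • x) = 1 := χ.one_of_mem_closedBall (by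
      simp [norm_smul]; change _ ≤ (1:ℝ); linarith)
    show χ ((1/2:ℝ) • x) - χ x = 0
    rw [h1, h2, sub_self]
  let q : Fin N → Fin N → E → ℝ := fun j m ξ =>
    ψ ξ * ((symb C ξ).adjugate j m / (symb C ξ).det) * (4 * Real.pi ^ 2)⁻¹
  have hqs : ∀ j m, ContDiff ℝ (⊤ : ℕ∞) (q j m) := by
    intro j m
    rw [contDiff_iff_contDiffAt]
    intro ξ
    by_cases hξ : ξ = 0
    · have : q j m =ᶠ[𝓝 ξ] fun _ => 0 := by
        filter_upwards [Metric.ball_mem_nhds ξ one_pos] with y hy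
        have : ψ y = 0 := hψ0 y (by subst hξ; simpa using (le_of_lt (by simpa using hy)))
        simp [q, this]
      exact contDiffAt_const.congr_of_eventuallyEq this
    · exact (hψs.contDiffAt.mul ((adj_contDiff _ (symb_contDiff C) j m).contDiffAt.div
        (det_contDiff _ (symb_contDiff C)).contDiffAt (symb_det C hLH ξ hξ))).mul contDiffAt_const
  have hqc : ∀ j m, HasCompactSupport (q j m) := fun j m => (hψc.mul_right).mul_right
  have lift : ∀ f : E → ℝ, ContDiff ℝ (⊤ : ℕ∞) f → HasCompactSupport f →
      ∃ F : 𝓢(E, ℂ), ∀ x, F x = (f x : ℂ) := by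
    intro f h1 h2
    refine ⟨HasCompactSupport.toSchwartzMap (f := fun x => (f x : ℂ)) (h2.comp_left (g := fun r : ℝ => (r : ℂ)) rfl)
      (Complex.ofRealCLM.contDiff.comp h1), fun x => rfl⟩
  choose Q hQ using fun j m => lift (q j m) (hqs j m) (hqc j m)
  obtain ⟨X, hX⟩ := lift (fun x => χ x) hχs χ.hasCompactSupport
  obtain ⟨X2, hX2⟩ := lift χb hχbs hχbc
  refine ⟨fun j m x => ((𝓕⁻ (Q j m) : 𝓢(E, ℂ)) x).re, fun x => ((𝓕⁻ X : 𝓢(E, ℂ)) x).re,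
    fun _ _ => RD_of_schwartz _, RD_of_schwartz _, ?_, ?_⟩
  · have h1 : ∫ x, ((𝓕⁻ X : 𝓢(E, ℂ)) x) = 1 := by
      have h2 : (𝓕 (𝓕⁻ X : 𝓢(E, ℂ)) : 𝓢(E, ℂ)) 0 = 1 := by
        rw [FourierTransform.fourier_fourierInv_eq, hX]
        have : χ (0 : E) = 1 := χ.one_of_mem_closedBall (Metric.mem_closedBall_self χ.rIn_pos.le)
        simp [this]
      rw [SchwartzMap.fourier_coe, Real.fourier_eq] at h2
      simpa using h2
    have h3 := integral_re (𝕜 := ℂ) (SchwartzMap.integrable (𝓕⁻ X : 𝓢(E, ℂ)) (μ := volume))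
    simp only [RCLike.re_to_complex] at h3
    rw [h3, h1]; simp
  · intro i m x
    have hderiv : ∀ (a b : Fin d) (j : Fin N),
        pd (EuclideanSpace.single a 1) (pd (EuclideanSpace.single b 1)
          (fun x : E => ((𝓕⁻ (Q j m) : 𝓢(E, ℂ)) x).re)) x =
        ((∂_{(EuclideanSpace.single a 1 : E)} (∂_{(EuclideanSpace.single b 1 : E)}
          (𝓕⁻ (Q j m) : 𝓢(E, ℂ)))) x).re := by
      intro a b j
      rw [pd_re_schwartz, pd_re_schwartz]
    have hG : ∀ (a b : Fin d) (j : Fin N), ∃ G : 𝓢(E, ℂ),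
        (∂_{(EuclideanSpace.single a 1 : E)} (∂_{(EuclideanSpace.single b 1 : E)}
          (𝓕⁻ (Q j m) : 𝓢(E, ℂ)))) = 𝓕⁻ G ∧ ∀ ξ, G ξ = ((-(4 * Real.pi ^ 2) * ξ a * ξ b * q j m ξ : ℝ) : ℂ) := by
      intro a b j
      refine ⟨_, by rw [SchwartzMap.lineDerivOp_fourierInv_eq, SchwartzMap.lineDerivOp_fourierInv_eq], ?_⟩
      intro ξ
      have t : ∀ v : E, (fun x : E => inner ℝ x v).HasTemperateGrowth := fun v => by fun_prop
      rw [smul_apply, SchwartzMap.smulLeftCLM_apply_apply (t _), smul_apply,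
        SchwartzMap.smulLeftCLM_apply_apply (t _), hQ]
      have hi : ∀ c : Fin d, inner ℝ ξ (EuclideanSpace.single c (1:ℝ)) = ξ c := fun c =>
        inner_single_eq ξ c
      rw [hi, hi]
      simp only [smul_eq_mul, Complex.real_smul]
      push_cast
      linear_combination (4 * (Real.pi:ℂ)^2 * (ξ a) * (ξ b) * (q j m ξ)) * Complex.I_sq
    choose G hG1 hG2 using hG
    let L : 𝓢(E, ℂ) →ₗ[ℂ] ℂ :=
      { toFun := fun F => (𝓕⁻ F : 𝓢(E, ℂ)) x
        map_add' := fun F1 F2 => by rw [FourierTransform.fourierInv_add]; rfl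
        map_smul' := fun c F => by rw [FourierTransform.fourierInv_smul]; rfl }
    have hsum : -(∑ a, ∑ j, ∑ b, ((C i a j b : ℝ) : ℂ) • G a b j) = if i = m then X2 - X else 0 := by
      ext ξ
      have hval : (-(∑ a, ∑ j, ∑ b, ((C i a j b : ℝ) : ℂ) • G a b j) : 𝓢(E, ℂ)) ξ =
          ((-(∑ a, ∑ j, ∑ b, C i a j b * (-(4 * Real.pi ^ 2) * ξ a * ξ b * q j m ξ)) : ℝ) : ℂ) := by
        simp only [neg_apply, sum_apply, smul_apply, hG2]
        push_cast
        rfl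
      rw [hval]
      have hψX : (((if i = m then X2 - X else 0 : 𝓢(E, ℂ))) ξ) = ((if i = m then ψ ξ else 0 : ℝ) : ℂ) := by
        split_ifs
        · simp [hX, hX2, ψ]
        · simp
      rw [hψX]
      congr 1
      have h4 : (4 * Real.pi ^ 2) ≠ 0 := by positivity
      have hm : -(∑ a, ∑ j, ∑ b, C i a j b * (-(4 * Real.pi ^ 2) * ξ a * ξ b * q j m ξ)) =
          ψ ξ * ((symb C ξ * (symb C ξ).adjugate) i m / (symb C ξ).det) := by
        rw [Matrix.mul_apply, Finset.sum_comm, ← Finset.sum_neg_distrib, Finset.sum_div, Finset.mul_sum]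
        refine Finset.sum_congr rfl fun j _ => ?_
        simp only [symb, Matrix.of_apply]
        have : ∀ (S : ℝ), S * (symb C ξ).adjugate j m / (symb C ξ).det * ψ ξ = S * (4 * Real.pi ^ 2) * q j m ξ := by
          intro S
          simp only [q]
          field_simp
        have h5 := this (∑ a, ∑ b, C i a j b * ξ a * ξ b)
        simp only [symb] at h5
        rw [mul_comm (ψ ξ), h5, ← Finset.sum_neg_distrib, Finset.sum_mul, Finset.sum_mul]
        refine Finset.sum_congr rfl fun a _ => ?_
        rw [← Finset.sum_neg_distrib, Finset.sum_mul, Finset.sum_mul]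
        refine Finset.sum_congr rfl fun b _ => ?_
        ring
      rw [hm, Matrix.mul_adjugate]
      by_cases hξ : ξ = 0
      · have : ψ ξ = 0 := hψ0 ξ (by simp [hξ])
        simp [this]
      · have := symb_det C hLH ξ hξ
        by_cases him : i = m
        · subst him; simp [this]
        · simp [him]
    have hL : ((L (-(∑ a, ∑ j, ∑ b, ((C i a j b : ℝ) : ℂ) • G a b j))).re) =
        -(∑ a, ∑ j, ∑ b, C i a j b *
          pd (EuclideanSpace.single a 1) (pd (EuclideanSpace.single b 1)
          (fun x : E => ((𝓕⁻ (Q j m) : 𝓢(E, ℂ)) x).re)) x) := by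
      simp only [map_neg, map_sum, map_smul, Complex.neg_re, Complex.re_sum, smul_eq_mul, Complex.re_ofReal_mul]
      congr 1
      refine Finset.sum_congr rfl fun a _ => Finset.sum_congr rfl fun j _ => Finset.sum_congr rfl fun b _ => ?_
      rw [hderiv, hG1]; rfl
    refine hL.symm.trans ?_
    rw [hsum]
    have hX2L : (𝓕⁻ X2 : 𝓢(E, ℂ)) x = 2 ^ d * (𝓕⁻ X : 𝓢(E, ℂ)) ((2:ℝ) • x) := by
      rw [SchwartzMap.fourierInv_coe, SchwartzMap.fourierInv_coe, Real.fourierInv_eq', Real.fourierInv_eq']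
      have := Measure.integral_comp_smul (μ := (volume : Measure E))
        (fun v : E => Complex.exp ((↑(2 * Real.pi * inner ℝ v ((2:ℝ) • x)) * Complex.I)) • X v) (1/2 : ℝ)
      rw [finrank_euclideanSpace_fin] at this
      have h6 : |(((1/2 : ℝ)) ^ d)⁻¹| = 2 ^ d := by
        rw [abs_of_pos (by positivity)]; simp
      rw [h6] at this
      rw [Complex.real_smul] at this
      push_cast at this ⊢
      rw [← this]
      refine integral_congr_ae (Eventually.of_forall fun v => ?_)
      simp only []
      rw [hX2, hX]
      simp only [inner_smul_left, inner_smul_right, χb]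
      congr 2
      simp
    split_ifs
    · rw [map_sub]
      show (((𝓕⁻ X2 : 𝓢(E, ℂ)) x) - (𝓕⁻ X : 𝓢(E, ℂ)) x).re = _
      rw [hX2L, Complex.sub_re]
      congr 1
      have : ((2:ℂ) ^ d) = ((2 ^ d : ℝ) : ℂ) := by push_cast; rfl
      rw [this, Complex.re_ofReal_mul]
    · simp

end kernel


section scale
variable {d : ℕ}
local notation "EE" => EuclideanSpace ℝ (Fin d)

theorem RD.pd' {g : EE → ℝ} (hg : RD g) (v : EE) : RD (pd v g) := by
  refine ⟨pd_contDiff hg.1 v, fun n K => ?_⟩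
  obtain ⟨C, hC⟩ := hg.2 (n+1) K
  refine ⟨‖v‖ * C, fun w => ?_⟩
  calc (1 + ‖w‖) ^ K * ‖iteratedFDeriv ℝ n (pd v g) w‖
      ≤ (1 + ‖w‖) ^ K * (‖v‖ * ‖iteratedFDeriv ℝ (n+1) g w‖) := by
        gcongr; exact norm_iter_pd_le hg.1 v n w
    _ = ‖v‖ * ((1 + ‖w‖) ^ K * ‖iteratedFDeriv ℝ (n+1) g w‖) := by ring
    _ ≤ _ := by gcongr; exact hC w

theorem RD.integrable_pow {g : EE → ℝ} (hg : RD g) (K : ℕ) :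
    Integrable (fun z => |g z| * (1 + ‖z‖) ^ K) := by
  obtain ⟨C, hC⟩ := hg.2 0 (K + (d + 1))
  have h1 : Integrable (fun x : EE => (1 + ‖x‖) ^ (-((d : ℝ) + 1))) :=
    integrable_one_add_norm (by simp)
  refine (h1.const_mul C).mono' ?_ (Eventually.of_forall fun z => ?_)
  · exact (hg.1.continuous.abs.mul (by fun_prop)).aestronglyMeasurable
  · have h2 := hC z
    rw [norm_iteratedFDeriv_zero, Real.norm_eq_abs, pow_add] at h2
    have h3 : (0:ℝ) < 1 + ‖z‖ := by positivity
    have h4 : (1 + ‖z‖) ^ (-((d : ℝ) + 1)) = ((1 + ‖z‖) ^ (d + 1))⁻¹ := by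
      rw [Real.rpow_neg h3.le]; norm_cast
    rw [h4, Real.norm_of_nonneg (by positivity), ← div_eq_mul_inv, le_div_iff₀ (by positivity)]
    linarith

theorem RD.integrable {g : EE → ℝ} (hg : RD g) : Integrable g := by
  have := hg.integrable_pow 0
  simp only [pow_zero, mul_one] at this
  exact (integrable_norm_iff hg.1.continuous.aestronglyMeasurable).1 this

theorem RD.sub {g h : EE → ℝ} (hg : RD g) (hh : RD h) : RD (fun x => g x - h x) := by
  refine ⟨hg.1.sub hh.1, fun n K => ?_⟩
  obtain ⟨C, hC⟩ := hg.2 n K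
  obtain ⟨D, hD⟩ := hh.2 n K
  refine ⟨C + D, fun w => ?_⟩
  have : iteratedFDeriv ℝ n (fun x => g x - h x) w = iteratedFDeriv ℝ n g w - iteratedFDeriv ℝ n h w :=
    iteratedFDeriv_sub_apply (hg.1.contDiffAt.of_le (by exact_mod_cast le_top))
      (hh.1.contDiffAt.of_le (by exact_mod_cast le_top))
  rw [this]
  calc _ ≤ (1 + ‖w‖) ^ K * (‖iteratedFDeriv ℝ n g w‖ + ‖iteratedFDeriv ℝ n h w‖) := by
        gcongr; exact norm_sub_le _ _
    _ ≤ _ := by rw [mul_add]; exact add_le_add (hC w) (hD w)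

/-- A compactly supported datum at scale `R`. -/
def SF (R : ℝ) (M : ℕ → ℝ) (F : EE → ℝ) : Prop :=
  ContDiff ℝ (⊤ : ℕ∞) F ∧ (∀ x, 2 * R < ‖x‖ → F x = 0) ∧
    ∀ n x, ‖iteratedFDeriv ℝ n F x‖ ≤ M n / R ^ n

/-- Convolution at scale `s`. -/
def TT (g F : EE → ℝ) (s : ℝ) (x : EE) : ℝ := ∫ z, g z * F (x - s • z)

theorem SF.M_nonneg {R : ℝ} (hR : 0 < R) {M : ℕ → ℝ} {F : EE → ℝ} (hF : SF R M F) (n : ℕ) :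
    0 ≤ M n := by
  have := (norm_nonneg _).trans (hF.2.2 n 0)
  rw [le_div_iff₀ (by positivity)] at this; simpa using this

theorem SF.iter_zero {R : ℝ} {M : ℕ → ℝ} {F : EE → ℝ} (hF : SF R M F) (n : ℕ)
    {x : EE} (hx : 2 * R < ‖x‖) : iteratedFDeriv ℝ n F x = 0 := by
  have : F =ᶠ[𝓝 x] fun _ => 0 := by
    filter_upwards [(isOpen_lt continuous_const continuous_norm).mem_nhds hx] with y hy
    exact hF.2.1 y hy
  rw [(this.iteratedFDeriv ℝ n).self_of_nhds]
  simp [iteratedFDeriv_fun_zero]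

theorem SF.compact {R : ℝ} {M : ℕ → ℝ} {F : EE → ℝ} (hF : SF R M F) : HasCompactSupport F :=
  HasCompactSupport.intro (isCompact_closedBall (0:EE) (2*R)) fun x hx => hF.2.1 x (by
    simpa using hx)

theorem TT_fine {g : EE → ℝ} (hg : RD g) {R : ℝ} {M : ℕ → ℝ} {F : EE → ℝ}
    (hF : SF R M F) (s : ℝ) :
    ContDiff ℝ (⊤ : ℕ∞) (TT g F s) ∧ ∀ n x, ‖iteratedFDeriv ℝ n (TT g F s) x‖ ≤
      ∫ z, |g z| * ‖iteratedFDeriv ℝ n F (x - s • z)‖ := by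
  have hit : ∀ n z x, iteratedFDeriv ℝ n (fun x => g z * F (x - s • z)) x =
      g z • iteratedFDeriv ℝ n F (x - s • z) := by
    intro n z x
    have h1 : ContDiffAt ℝ n (fun x => F (x - s • z)) x :=
      ((hF.1.comp (contDiff_id.sub contDiff_const)).contDiffAt).of_le (by exact_mod_cast le_top)
    have := iteratedFDeriv_const_smul_apply (𝕜 := ℝ) (i := n) (a := g z) h1
    have h2 : (g z • fun x => F (x - s • z)) = fun x => g z * F (x - s • z) := rfl
    rw [h2] at this
    rw [this, iteratedFDeriv_comp_sub]
  have key := integral_lemma (f := fun z x => g z * F (x - s • z)) (μ := (volume : Measure EE))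
    (by
      have : ContDiff ℝ (⊤ : ℕ∞) (fun p : EE × EE => g p.1 * F (p.2 - s • p.1)) :=
        (hg.1.comp contDiff_fst).mul (hF.1.comp (contDiff_snd.sub (contDiff_fst.const_smul s)))
      exact this)
    (fun n z => |g z| * (M n / R ^ n))
    (fun n => hg.integrable.abs.mul_const _)
    (fun n => Eventually.of_forall fun z x => by
      rw [hit, norm_smul, Real.norm_eq_abs]
      gcongr
      exact hF.2.2 n _)
  refine ⟨key.1, fun n x => ?_⟩
  have h := key.2 n x
  have h' : iteratedFDeriv ℝ n (TT g F s) x = ∫ z, g z • iteratedFDeriv ℝ n F (x - s • z) := by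
    refine Eq.trans h ?_
    simp only [hit]
  rw [h']
  refine (norm_integral_le_integral_norm _).trans (le_of_eq ?_)
  simp only [norm_smul, Real.norm_eq_abs]

theorem TT_eq_coarse (g F : EE → ℝ) {s : ℝ} (hs : 0 < s) (x : EE) :
    TT g F s x = (s ^ d)⁻¹ * ∫ y, F y * g (s⁻¹ • (x - y)) := by
  unfold TT
  have h1 := integral_sub_left_eq_self (μ := (volume : Measure EE)) (fun y => F y * g (s⁻¹ • (x - y))) x
  have h2 := Measure.integral_comp_smul (μ := (volume : Measure EE))
    (fun y => F (x - y) * g (s⁻¹ • (x - (x - y)))) s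
  rw [finrank_euclideanSpace_fin, abs_of_pos (by positivity), h1] at h2
  rw [← smul_eq_mul, ← h2]
  refine integral_congr_ae (Eventually.of_forall fun z => ?_)
  simp only [sub_sub_cancel, smul_smul, inv_mul_cancel₀ hs.ne', one_smul]
  ring

theorem TT_coarse {g : EE → ℝ} (hg : RD g) {R : ℝ} {M : ℕ → ℝ} {F : EE → ℝ}
    (hF : SF R M F) {s : ℝ} (hs : 0 < s) : ∀ n x, iteratedFDeriv ℝ n (TT g F s) x =
      (s ^ d)⁻¹ • ∫ y, (F y * s⁻¹ ^ n) • iteratedFDeriv ℝ n g (s⁻¹ • (x - y)) := by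
  have hit : ∀ n y x, iteratedFDeriv ℝ n (fun x => F y * g (s⁻¹ • (x - y))) x =
      (F y * s⁻¹ ^ n) • iteratedFDeriv ℝ n g (s⁻¹ • (x - y)) := by
    intro n z x
    have h0 : ContDiff ℝ n (fun x => g (s⁻¹ • x)) :=
      (hg.1.comp (contDiff_const_smul _)).of_le (by exact_mod_cast le_top)
    have h1 : ContDiffAt ℝ n (fun x => g (s⁻¹ • (x - z))) x :=
      ((hg.1.comp ((contDiff_id.sub contDiff_const).const_smul _)).contDiffAt).of_le (by exact_mod_cast le_top)
    have := iteratedFDeriv_const_smul_apply (𝕜 := ℝ) (i := n) (a := F z) h1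
    have h2 : (F z • fun x => g (s⁻¹ • (x - z))) = fun x => F z * g (s⁻¹ • (x - z)) := rfl
    rw [h2] at this
    rw [this, iteratedFDeriv_comp_sub (f := fun x => g (s⁻¹ • x)),
      iteratedFDeriv_comp_const_smul _ (hg.1.of_le (by exact_mod_cast le_top)), smul_smul]
  choose Cg hCg using fun n => hg.2 n 0
  have key := integral_lemma (f := fun y x => F y * g (s⁻¹ • (x - y))) (μ := (volume : Measure EE))
    (by
      have : ContDiff ℝ (⊤ : ℕ∞) (fun p : EE × EE => F p.1 * g (s⁻¹ • (p.2 - p.1))) :=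
        (hF.1.comp contDiff_fst).mul (hg.1.comp ((contDiff_snd.sub contDiff_fst).const_smul _))
      exact this)
    (fun n y => |F y| * (s⁻¹ ^ n * Cg n))
    (fun n => (hF.1.continuous.integrable_of_hasCompactSupport hF.compact).abs.mul_const _)
    (fun n => Eventually.of_forall fun z x => by
      rw [hit, norm_smul, Real.norm_eq_abs, abs_mul, mul_assoc, abs_of_pos (by positivity : 0 < s⁻¹ ^ n)]
      gcongr
      simpa using hCg n (s⁻¹ • (x - z)))
  intro n x
  have h := key.2 n x
  have e : TT g F s = (s ^ d)⁻¹ • fun x => ∫ y, F y * g (s⁻¹ • (x - y)) := by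
    funext x; rw [TT_eq_coarse g F hs]; rfl
  rw [e, iteratedFDeriv_const_smul_apply (key.1.contDiffAt.of_le (by exact_mod_cast le_top)), h]
  simp only [hit]

theorem TT_pd {g : EE → ℝ} (hg : RD g) {R : ℝ} {M : ℕ → ℝ} {F : EE → ℝ}
    (hF : SF R M F) {s : ℝ} (hs : 0 < s) (v w x : EE) :
    pd v (pd w (TT g F s)) x = (s ^ 2)⁻¹ * TT (pd v (pd w g)) F s x := by
  rw [pd_pd_eq_iter (TT_fine hg hF s).1, TT_coarse hg hF hs, TT_eq_coarse _ _ hs]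
  obtain ⟨C, hC⟩ := hg.2 2 0
  have hIntg : Integrable (fun y => (F y * s⁻¹ ^ 2) • iteratedFDeriv ℝ 2 g (s⁻¹ • (x - y))) := by
    refine (((hF.1.continuous.integrable_of_hasCompactSupport hF.compact).abs.mul_const (s⁻¹ ^ 2 * C))).mono'
      ?_ (Eventually.of_forall fun y => ?_)
    · refine Continuous.aestronglyMeasurable ?_
      have := hg.1.continuous_iteratedFDeriv (m := 2) (WithTop.coe_le_coe.2 le_top)
      have hc := hF.1.continuous
      fun_prop
    · rw [norm_smul, Real.norm_eq_abs, abs_mul, mul_assoc, abs_of_pos (by positivity : 0 < s⁻¹ ^ 2)]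
      gcongr
      simpa using hC (s⁻¹ • (x - y))
  have happ := (ContinuousLinearMap.integral_comp_comm
    (ContinuousMultilinearMap.apply ℝ (fun _ : Fin 2 => EE) ℝ ![v, w]) hIntg)
  simp only [ContinuousMultilinearMap.apply_apply, smul_apply] at happ
  rw [smul_apply, ← happ]
  simp only [← pd_pd_eq_iter hg.1, smul_eq_mul]
  rw [← mul_assoc, mul_comm ((s^2)⁻¹), mul_assoc, ← integral_const_mul ((s^2)⁻¹)]
  congr 2
  funext y
  rw [inv_pow]; ring

end scale


section scale2
variable {d : ℕ}
local notation "EE" => EuclideanSpace ℝ (Fin d)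

theorem fine_bound {g : EE → ℝ} (hg : RD g) (q : ℕ) : ∃ C : ℝ, 0 ≤ C ∧
    ∀ (R : ℝ) (M : ℕ → ℝ) (F : EE → ℝ) (s : ℝ) (n : ℕ) (x : EE), 0 < R → SF R M F → 0 < s → s ≤ R →
      ‖iteratedFDeriv ℝ n (TT g F s) x‖ ≤ C * (M n / R ^ n) * (R / (R + ‖x‖)) ^ q := by
  refine ⟨3 ^ q * ∫ z, |g z| * (1 + ‖z‖) ^ q, by positivity, ?_⟩
  intro R M F s n x hR hF hs hsR
  refine ((TT_fine hg hF s).2 n x).trans ?_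
  have hM := hF.M_nonneg hR n
  have : 3 ^ q * (∫ z, |g z| * (1 + ‖z‖) ^ q) * (M n / R ^ n) * (R / (R + ‖x‖)) ^ q =
      ∫ z, (3 ^ q * (M n / R ^ n) * (R / (R + ‖x‖)) ^ q) * (|g z| * (1 + ‖z‖) ^ q) := by
    rw [integral_const_mul]; ring
  rw [this]
  refine integral_mono_of_nonneg (Eventually.of_forall fun z => by positivity)
    ((hg.integrable_pow q).const_mul _) (Eventually.of_forall fun z => ?_)
  simp only []
  by_cases hz : 2 * R < ‖x - s • z‖
  · rw [hF.iter_zero n hz, norm_zero, mul_zero]; positivity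
  · push Not at hz
    have h1 : ‖x‖ ≤ 2 * R + R * ‖z‖ := by
      calc ‖x‖ = ‖(x - s • z) + s • z‖ := by simp
        _ ≤ ‖x - s • z‖ + ‖s • z‖ := norm_add_le _ _
        _ ≤ 2 * R + R * ‖z‖ := by
          rw [norm_smul, Real.norm_of_nonneg hs.le]
          gcongr
    have h2 : 1 ≤ 3 * (R / (R + ‖x‖)) * (1 + ‖z‖) := by
      rw [mul_div_assoc', div_mul_eq_mul_div, le_div_iff₀ (by positivity)]
      nlinarith [norm_nonneg z]
    calc |g z| * ‖iteratedFDeriv ℝ n F (x - s • z)‖ ≤ |g z| * (M n / R ^ n) * 1 := by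
          rw [mul_one]; gcongr; exact hF.2.2 n _
      _ ≤ |g z| * (M n / R ^ n) * (3 * (R / (R + ‖x‖)) * (1 + ‖z‖)) ^ q := by
          gcongr; exact one_le_pow₀ h2
      _ = _ := by rw [mul_pow, mul_pow]; ring

theorem coarse_bound {g : EE → ℝ} (hg : RD g) (n q : ℕ) : ∃ C : ℝ, 0 ≤ C ∧
    ∀ (R : ℝ) (M : ℕ → ℝ) (F : EE → ℝ) (s : ℝ) (x : EE), 0 < R → SF R M F → R ≤ s →
      ‖iteratedFDeriv ℝ n (TT g F s) x‖ ≤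
        C * M 0 * R ^ d * ((s ^ d)⁻¹ * s⁻¹ ^ n) * (s / (s + ‖x‖)) ^ q := by
  obtain ⟨C, hC⟩ := hg.2 n q
  have hC0 : 0 ≤ C := le_trans (by positivity) (hC 0)
  refine ⟨C * 3 ^ q * 2 ^ d * volume.real (Metric.ball (0 : EE) 1), by positivity, ?_⟩
  intro R M F s x hR hF hRs
  have hs : 0 < s := hR.trans_le hRs
  have hM := hF.M_nonneg hR 0
  rw [TT_coarse hg hF hs, norm_smul, Real.norm_of_nonneg (by positivity)]
  have h1 : ∫ y, (F y * s⁻¹ ^ n) • iteratedFDeriv ℝ n g (s⁻¹ • (x - y)) =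
      ∫ y in Metric.closedBall (0 : EE) (2 * R), (F y * s⁻¹ ^ n) • iteratedFDeriv ℝ n g (s⁻¹ • (x - y)) := by
    symm
    refine setIntegral_eq_integral_of_forall_compl_eq_zero fun y hy => ?_
    rw [hF.2.1 y (by simpa using hy)]; simp
  rw [h1]
  have h2 : ‖∫ y in Metric.closedBall (0 : EE) (2 * R), (F y * s⁻¹ ^ n) • iteratedFDeriv ℝ n g (s⁻¹ • (x - y))‖
      ≤ (M 0 * s⁻¹ ^ n * (C * (3 * (s / (s + ‖x‖))) ^ q)) * volume.real (Metric.closedBall (0 : EE) (2 * R)) := by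
    refine norm_setIntegral_le_of_norm_le_const (isCompact_closedBall _ _).measure_lt_top fun y hy => ?_
    have hy' : ‖y‖ ≤ 2 * R := by simpa using hy
    rw [norm_smul, norm_mul, Real.norm_of_nonneg (by positivity : 0 ≤ s⁻¹ ^ n)]
    have h3 : ‖F y‖ ≤ M 0 := by simpa using hF.2.2 0 y
    have h4 : ‖iteratedFDeriv ℝ n g (s⁻¹ • (x - y))‖ ≤ C * (3 * (s / (s + ‖x‖))) ^ q := by
      have h5 := hC (s⁻¹ • (x - y))
      have h6 : (s + ‖x‖) / (3 * s) ≤ 1 + ‖s⁻¹ • (x - y)‖ := by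
        rw [norm_smul, norm_inv, Real.norm_of_nonneg hs.le, div_le_iff₀ (by positivity)]
        have : ‖x‖ ≤ ‖x - y‖ + ‖y‖ := by simpa using norm_add_le (x - y) y
        have e : (1 + s⁻¹ * ‖x - y‖) * (3 * s) = 3 * s + 3 * ‖x - y‖ := by field_simp
        rw [e]; linarith [norm_nonneg (x - y)]
      have h7 : ((s + ‖x‖) / (3 * s)) ^ q * ‖iteratedFDeriv ℝ n g (s⁻¹ • (x - y))‖ ≤ C := by
        refine le_trans ?_ h5
        gcongr
      have h8 : (3 * (s / (s + ‖x‖))) = ((s + ‖x‖) / (3 * s))⁻¹ := by rw [inv_div]; ring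
      rw [h8, inv_pow, ← div_eq_mul_inv, le_div_iff₀ (by positivity)]
      linarith
    gcongr
  calc _ ≤ (s ^ d)⁻¹ * ((M 0 * s⁻¹ ^ n * (C * (3 * (s / (s + ‖x‖))) ^ q)) *
        volume.real (Metric.closedBall (0 : EE) (2 * R))) := by gcongr
    _ = _ := by
      rw [Measure.addHaar_real_closedBall _ _ (by positivity), finrank_euclideanSpace_fin]
      rw [mul_pow, mul_pow]; ring

theorem tele_ineq {s r : ℝ} (hs : 0 < s) (hr : 0 ≤ r) {q : ℕ} (hq : 1 ≤ q) :
    s / (s + r) ^ (q + 1) ≤ 2 * (1 / (s + r) ^ q - 1 / (2 * s + r) ^ q) := by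
  obtain ⟨k, rfl⟩ := Nat.exists_eq_add_of_le' hq
  set A := s + r with hA
  set B := 2 * s + r with hB
  have hA0 : 0 < A := by positivity
  have hB0 : 0 < B := by positivity
  have hs' : s = B - A := by rw [hA, hB]; ring
  have hAB : A ≤ B := by linarith
  have hB2 : B ≤ 2 * A := by linarith
  rw [div_sub_div _ _ (by positivity) (by positivity), mul_div_assoc', div_le_div_iff₀ (by positivity) (by positivity)]
  have h1 : A ^ k ≤ B ^ k := by gcongr
  have h2 : s * B ^ k ≤ B ^ (k+1) - A ^ (k+1) := by
    rw [pow_succ, pow_succ, hs']; nlinarith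
  have h3 : s * B ^ (k+1) ≤ (B ^ (k+1) - A ^ (k+1)) * (2 * A) := by
    calc s * B ^ (k+1) = (s * B ^ k) * B := by ring
      _ ≤ (B ^ (k+1) - A ^ (k+1)) * (2 * A) := by
        have : 0 ≤ s * B ^ k := by positivity
        gcongr
        linarith
  have h4 : 0 ≤ A ^ (k+1) := by positivity
  calc s * (A ^ (k+1) * B ^ (k+1)) = A ^ (k+1) * (s * B ^ (k+1)) := by ring
    _ ≤ A ^ (k+1) * ((B ^ (k+1) - A ^ (k+1)) * (2 * A)) := by gcongr
    _ = _ := by ring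

/-- The `k`-th dyadic piece. -/
def piece (g F : EE → ℝ) (R : ℝ) (k : ℕ) (x : EE) : ℝ :=
  (R * 2 ^ k) ^ 2 * TT g F (R * 2 ^ k) x + (R / 2 ^ (k + 1)) ^ 2 * TT g F (R / 2 ^ (k + 1)) x

/-- The normalised sum of the dyadic pieces. -/
def VV (g F : EE → ℝ) (R : ℝ) (x : EE) : ℝ := ∑' k, (piece g F R k x - piece g F R k 0)

theorem piece_contDiff {g : EE → ℝ} (hg : RD g) {R : ℝ} {M : ℕ → ℝ} {F : EE → ℝ}
    (hF : SF R M F) (k : ℕ) : ContDiff ℝ (⊤ : ℕ∞) (piece g F R k) :=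
  (contDiff_const.mul (TT_fine hg hF _).1).add (contDiff_const.mul (TT_fine hg hF _).1)

theorem iter_piece {g : EE → ℝ} (hg : RD g) {R : ℝ} {M : ℕ → ℝ} {F : EE → ℝ}
    (hF : SF R M F) (k n : ℕ) (x : EE) (c : ℝ) (hn : 1 ≤ n) :
    iteratedFDeriv ℝ n (fun x => piece g F R k x - c) x =
      (R * 2 ^ k) ^ 2 • iteratedFDeriv ℝ n (TT g F (R * 2 ^ k)) x +
      (R / 2 ^ (k + 1)) ^ 2 • iteratedFDeriv ℝ n (TT g F (R / 2 ^ (k + 1))) x := by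
  have le : ((n : ℕ∞) : WithTop ℕ∞) ≤ ((⊤ : ℕ∞) : WithTop ℕ∞) := by exact_mod_cast le_top
  have hT : ∀ s, ContDiffAt ℝ n (TT g F s) x := fun s => (TT_fine hg hF s).1.contDiffAt.of_le le
  have e : (fun x => piece g F R k x - c) =
    (((R * 2 ^ k) ^ 2 • (TT g F (R * 2 ^ k)) + (R / 2 ^ (k + 1)) ^ 2 • (TT g F (R / 2 ^ (k + 1)))) +
      fun _ => -c) := by
    funext y; simp [piece, sub_eq_add_neg]
  rw [e, iteratedFDeriv_add_apply _ contDiffAt_const, iteratedFDeriv_add_apply,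
    iteratedFDeriv_const_smul_apply (hT _), iteratedFDeriv_const_smul_apply (hT _),
    iteratedFDeriv_const_of_ne (by omega)]
  · simp
  · exact ContDiffAt.const_smul ((R * 2 ^ k) ^ 2) (hT _)
  · exact ContDiffAt.const_smul ((R / 2 ^ (k + 1)) ^ 2) (hT _)
  · exact (ContDiffAt.const_smul ((R * 2 ^ k) ^ 2) (hT _)).add
      (ContDiffAt.const_smul ((R / 2 ^ (k + 1)) ^ 2) (hT _))

theorem piece_tele {g : EE → ℝ} (hg : RD g) (n q : ℕ) (hq : 1 ≤ q) (hnq : q + 2 = d + n) (hn : 1 ≤ n) :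
    ∃ C : ℝ, 0 ≤ C ∧
    ∀ (R : ℝ) (M : ℕ → ℝ) (F : EE → ℝ) (k : ℕ) (x : EE) (c : ℝ), 0 < R → SF R M F →
      ‖iteratedFDeriv ℝ n (fun x => piece g F R k x - c) x‖ ≤ C * (M 0 + M n) * R ^ d *
        ((1 / (R * 2 ^ k + ‖x‖) ^ q + (1 / 2) ^ k / (R + ‖x‖) ^ q) -
          (1 / (R * 2 ^ (k+1) + ‖x‖) ^ q + (1 / 2) ^ (k+1) / (R + ‖x‖) ^ q)) := by
  obtain ⟨C1, hC1, h1⟩ := fine_bound hg q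
  obtain ⟨C2, hC2, h2⟩ := coarse_bound hg n (q + 1)
  refine ⟨C1 + 2 * C2, by positivity, ?_⟩
  intro R M F k x c hR hF
  have hM0 := hF.M_nonneg hR 0
  have hMn := hF.M_nonneg hR n
  rw [iter_piece hg hF k n x c hn]
  have hk : (1:ℝ) ≤ 2 ^ k := one_le_pow₀ (by norm_num)
  have hk' : (1:ℝ) ≤ 2 ^ (k+1) := one_le_pow₀ (by norm_num)
  set s := R * 2 ^ k with hs
  set t := R / 2 ^ (k+1) with ht
  have hs0 : 0 < s := by positivity
  have ht0 : 0 < t := by positivity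
  have hsR : R ≤ s := by rw [hs]; nlinarith
  have htR : t ≤ R := div_le_self hR.le hk'
  have hs2 : R * 2 ^ (k+1) = 2 * s := by rw [hs]; ring
  have hA := h2 R M F s x hR hF hsR
  have hB := h1 R M F t n x hR hF ht0 htR
  have r0 := norm_nonneg x
  have hA' : s ^ 2 * ‖iteratedFDeriv ℝ n (TT g F s) x‖ ≤
      2 * C2 * M 0 * R ^ d * (1 / (s + ‖x‖) ^ q - 1 / (2 * s + ‖x‖) ^ q) := by
    calc s ^ 2 * ‖iteratedFDeriv ℝ n (TT g F s) x‖ ≤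
        s ^ 2 * (C2 * M 0 * R ^ d * ((s ^ d)⁻¹ * s⁻¹ ^ n) * (s / (s + ‖x‖)) ^ (q + 1)) := by gcongr
      _ = C2 * M 0 * R ^ d * (s / (s + ‖x‖) ^ (q + 1)) := by
        have e1 : (s ^ d)⁻¹ * s⁻¹ ^ n = (s ^ (q + 2))⁻¹ := by
          rw [hnq, inv_pow, ← mul_inv, ← pow_add]
        rw [e1, div_pow]
        field_simp
        ring
      _ ≤ C2 * M 0 * R ^ d * (2 * (1 / (s + ‖x‖) ^ q - 1 / (2 * s + ‖x‖) ^ q)) := by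
        gcongr; exact tele_ineq hs0 r0 hq
      _ = _ := by ring
  have hB' : t ^ 2 * ‖iteratedFDeriv ℝ n (TT g F t) x‖ ≤
      C1 * M n * R ^ d * ((1 / 2) ^ k / (R + ‖x‖) ^ q - (1 / 2) ^ (k+1) / (R + ‖x‖) ^ q) := by
    calc t ^ 2 * ‖iteratedFDeriv ℝ n (TT g F t) x‖ ≤
        t ^ 2 * (C1 * (M n / R ^ n) * (R / (R + ‖x‖)) ^ q) := by gcongr
      _ ≤ (R ^ 2 * (1/2) ^ (k+1)) * (C1 * (M n / R ^ n) * (R / (R + ‖x‖)) ^ q) := by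
        gcongr
        rw [ht, div_pow, div_eq_mul_inv]
        gcongr
        rw [one_div, inv_pow]
        gcongr
        nlinarith
      _ = _ := by
        have e1 : R ^ d = R ^ 2 * R ^ q / R ^ n := by
          rw [eq_div_iff (by positivity), ← pow_add, ← pow_add]; congr 1; omega
        rw [e1, div_pow R]
        have e2 : ((1:ℝ) / 2) ^ k = 2 * (1/2) ^ (k+1) := by rw [pow_succ]; ring
        rw [e2]
        generalize ((1:ℝ)/2) ^ (k+1) = y
        ring
  have hX : 0 ≤ (1 / (s + ‖x‖) ^ q - 1 / (2 * s + ‖x‖) ^ q) := by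
    have := tele_ineq hs0 r0 hq
    have h3 : 0 ≤ s / (s + ‖x‖) ^ (q + 1) := by positivity
    linarith
  have hY : 0 ≤ ((1 / 2 : ℝ) ^ k / (R + ‖x‖) ^ q - (1 / 2) ^ (k+1) / (R + ‖x‖) ^ q) := by
    rw [← sub_div, pow_succ]
    apply div_nonneg _ (by positivity)
    have : (0:ℝ) ≤ (1/2)^k := by positivity
    linarith
  set X := (1 / (s + ‖x‖) ^ q - 1 / (2 * s + ‖x‖) ^ q) with hXd
  set Y := ((1 / 2 : ℝ) ^ k / (R + ‖x‖) ^ q - (1 / 2) ^ (k+1) / (R + ‖x‖) ^ q) with hYd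
  calc _ ≤ s ^ 2 * ‖iteratedFDeriv ℝ n (TT g F s) x‖ + t ^ 2 * ‖iteratedFDeriv ℝ n (TT g F t) x‖ := by
        refine (norm_add_le _ _).trans ?_
        rw [norm_smul, norm_smul, Real.norm_of_nonneg (by positivity), Real.norm_of_nonneg (by positivity)]
    _ ≤ 2 * C2 * M 0 * R ^ d * X + C1 * M n * R ^ d * Y := add_le_add hA' hB'
    _ ≤ (C1 + 2 * C2) * (M 0 + M n) * R ^ d * X + (C1 + 2 * C2) * (M 0 + M n) * R ^ d * Y := by
        have hR' : 0 < R ^ d := by positivity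
        have i1 : 2 * C2 * M 0 ≤ (C1 + 2 * C2) * (M 0 + M n) := by
          nlinarith [mul_nonneg hC1 hM0, mul_nonneg hC1 hMn, mul_nonneg hC2 hMn]
        have i2 : C1 * M n ≤ (C1 + 2 * C2) * (M 0 + M n) := by
          nlinarith [mul_nonneg hC1 hM0, mul_nonneg hC2 hM0, mul_nonneg hC2 hMn]
        exact add_le_add (mul_le_mul_of_nonneg_right (mul_le_mul_of_nonneg_right i1 hR'.le) hX)
          (mul_le_mul_of_nonneg_right (mul_le_mul_of_nonneg_right i2 hR'.le) hY)
    _ = _ := by rw [hs2, hXd, hYd]; ring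

theorem VV_props {g : EE → ℝ} (hg : RD g) (hd : 2 ≤ d) {R : ℝ} (hR : 0 < R) {M : ℕ → ℝ} {F : EE → ℝ}
    (hF : SF R M F) :
    ContDiff ℝ (⊤ : ℕ∞) (VV g F R) ∧
    (∀ n, 1 ≤ n → ∀ x, ‖iteratedFDeriv ℝ n (VV g F R) x‖ ≤
      ∑' k, ‖iteratedFDeriv ℝ n (fun x => piece g F R k x - piece g F R k 0) x‖) ∧
    (∀ v w x, HasSum (fun k => TT (pd v (pd w g)) F (R * 2 ^ k) x + TT (pd v (pd w g)) F (R / 2 ^ (k+1)) x)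
      (pd v (pd w (VV g F R)) x)) := by
  have hC : ∀ n, ∃ C : ℝ, 1 ≤ n → ∀ k x,
      ‖iteratedFDeriv ℝ n (fun x => piece g F R k x - piece g F R k 0) x‖ ≤ C * (1/2) ^ k := by
    intro n
    by_cases hn : 1 ≤ n
    · obtain ⟨C, hC0, hC⟩ := piece_tele hg n (d + n - 2) (by omega) (by omega) hn
      refine ⟨C * (M 0 + M n) * R ^ d * (2 * (1 / R ^ (d + n - 2))), fun _ k x => ?_⟩
      have hM0 := hF.M_nonneg hR 0
      have hMn := hF.M_nonneg hR n
      refine (hC R M F k x _ hR hF).trans ?_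
      rw [mul_assoc _ _ ((1/2:ℝ)^k)]
      gcongr
      set q := d + n - 2 with hq
      have hq1 : 1 ≤ q := by omega
      have a1 : 1 / (R * 2 ^ k + ‖x‖) ^ q ≤ 1 / R ^ q * (1/2) ^ k := by
        have : R ^ q * 2 ^ k ≤ (R * 2 ^ k + ‖x‖) ^ q := by
          calc R ^ q * 2 ^ k ≤ R ^ q * (2 ^ k) ^ q := by
                gcongr; exact le_self_pow₀ (one_le_pow₀ (by norm_num)) (by omega)
            _ = (R * 2 ^ k) ^ q := by rw [mul_pow]
            _ ≤ _ := by gcongr; linarith [norm_nonneg x]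
        calc _ ≤ 1 / (R ^ q * 2 ^ k) := by gcongr
          _ = _ := by rw [one_div_pow]; field_simp
      have a2 : (1 / 2 : ℝ) ^ k / (R + ‖x‖) ^ q ≤ 1 / R ^ q * (1/2) ^ k := by
        rw [div_eq_mul_one_div, mul_comm]
        gcongr; linarith [norm_nonneg x]
      have a3 : 0 ≤ (1 / (R * 2 ^ (k+1) + ‖x‖) ^ q + (1 / 2) ^ (k+1) / (R + ‖x‖) ^ q) := by positivity
      linarith
    · exact ⟨0, fun h => absurd h hn⟩
  choose C hC using hC
  have key := series_lemma (f := fun k x => piece g F R k x - piece g F R k 0)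
    (fun k => (piece_contDiff hg hF k).sub contDiff_const) (fun k => sub_self _)
    (fun n k => C n * (1/2) ^ k)
    (fun n _ => (summable_geometric_of_lt_one (by norm_num) (by norm_num)).mul_left _)
    (fun n hn k x => hC n hn k x)
  refine ⟨key.1, key.2.1, fun v w x => ?_⟩
  have h3 := key.2.2 v w x
  have e : (fun k => pd v (pd w ((fun k x => piece g F R k x - piece g F R k 0) k)) x) =
      fun k => TT (pd v (pd w g)) F (R * 2 ^ k) x + TT (pd v (pd w g)) F (R / 2 ^ (k+1)) x := by
    funext k
    rw [pd_pd_eq_iter ((piece_contDiff hg hF k).sub contDiff_const), iter_piece hg hF k 2 x _ (by norm_num),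
      add_apply, smul_apply, smul_apply,
      ← pd_pd_eq_iter (TT_fine hg hF _).1, ← pd_pd_eq_iter (TT_fine hg hF _).1,
      TT_pd hg hF (by positivity), TT_pd hg hF (by positivity), smul_eq_mul, smul_eq_mul,
      mul_inv_cancel_left₀ (by positivity), mul_inv_cancel_left₀ (by positivity)]
  rw [e] at h3
  exact h3

theorem VV_bound {g : EE → ℝ} (hg : RD g) (hd : 2 ≤ d) (n q : ℕ) (hnq : q + 2 = d + n) (hn : 1 ≤ n) :
    ∃ C : ℝ, 0 ≤ C ∧ ∀ (R : ℝ) (M : ℕ → ℝ) (F : EE → ℝ) (x : EE), 0 < R → SF R M F →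
      ‖iteratedFDeriv ℝ n (VV g F R) x‖ ≤ C * (M 0 + M n) * R ^ d / (R + ‖x‖) ^ q := by
  obtain ⟨C, hC0, hC⟩ := piece_tele hg n q (by omega) hnq hn
  refine ⟨2 * C, by positivity, ?_⟩
  intro R M F x hR hF
  have hM0 := hF.M_nonneg hR 0
  have hMn := hF.M_nonneg hR n
  refine ((VV_props hg hd hR hF).2.1 n hn x).trans ?_
  refine Real.tsum_le_of_sum_range_le (fun _ => norm_nonneg _) fun K => ?_
  refine (Finset.sum_le_sum fun k _ => hC R M F k x _ hR hF).trans ?_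
  rw [← Finset.mul_sum, Finset.sum_range_sub'
    (fun k => 1 / (R * 2 ^ k + ‖x‖) ^ q + (1 / 2) ^ k / (R + ‖x‖) ^ q)]
  have : 0 ≤ (1 / (R * 2 ^ K + ‖x‖) ^ q + (1 / 2) ^ K / (R + ‖x‖) ^ q) := by positivity
  have h2 : 0 ≤ C * (M 0 + M n) * R ^ d := by positivity
  calc _ ≤ C * (M 0 + M n) * R ^ d * (1 / (R * 2 ^ 0 + ‖x‖) ^ q + (1 / 2) ^ 0 / (R + ‖x‖) ^ q) := by
        gcongr; linarith
    _ = _ := by simp only [pow_zero, mul_one]; ring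

end scale2


section system
variable {d N : ℕ}
local notation "EE" => EuclideanSpace ℝ (Fin d)

theorem pd_sum {ι : Type*} (s : Finset ι) {f : ι → EE → ℝ} (hf : ∀ i, ContDiff ℝ (⊤ : ℕ∞) (f i)) (v : EE) :
    pd v (fun x => ∑ i ∈ s, f i x) = fun x => ∑ i ∈ s, pd v (f i) x := by
  funext x
  unfold pd
  rw [fderiv_fun_sum fun i _ => ((hf i).differentiable (by norm_num)).differentiableAt, sum_apply]

/-- The elasticity operator acting on componentwise functions. -/
def HH (C : Fin N → Fin d → Fin N → Fin d → ℝ) (u : Fin N → EE → ℝ) (i : Fin N) (x : EE) : ℝ :=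
  -(∑ a, ∑ j, ∑ b, C i a j b *
        pd (EuclideanSpace.single a 1) (pd (EuclideanSpace.single b 1) (u j)) x)

theorem HH_sum (C : Fin N → Fin d → Fin N → Fin d → ℝ) {ι : Type*} (s : Finset ι)
    {u : ι → Fin N → EE → ℝ} (hu : ∀ k j, ContDiff ℝ (⊤ : ℕ∞) (u k j)) (i : Fin N) (x : EE) :
    HH C (fun j x => ∑ k ∈ s, u k j x) i x = ∑ k ∈ s, HH C (u k) i x := by
  unfold HH
  rw [Finset.sum_neg_distrib]
  congr 1
  rw [Finset.sum_comm' (t' := Finset.univ) (s' := fun _ => s) (by simp)]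
  refine Finset.sum_congr rfl fun a _ => ?_
  rw [Finset.sum_comm' (t' := Finset.univ) (s' := fun _ => s) (by simp)]
  refine Finset.sum_congr rfl fun j _ => ?_
  rw [Finset.sum_comm' (t' := Finset.univ) (s' := fun _ => s) (by simp)]
  refine Finset.sum_congr rfl fun b _ => ?_
  rw [pd_sum s (fun k => hu k j), pd_sum s (fun k => pd_contDiff (hu k j) _), Finset.mul_sum]

theorem TT_tendsto_zero {φ : EE → ℝ} (hφ : RD φ) (hφ1 : ∫ x, φ x = 1) {R : ℝ}
    {M : ℕ → ℝ} {F : EE → ℝ} (hF : SF R M F) (x : EE) :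
    Tendsto (fun k : ℕ => TT φ F (R / 2 ^ (k + 1)) x) atTop (𝓝 (F x)) := by
  have h0 : Tendsto (fun k : ℕ => R / 2 ^ (k + 1)) atTop (𝓝 0) := by
    have : Tendsto (fun k : ℕ => R * (1/2 : ℝ) ^ (k+1)) atTop (𝓝 (R * 0)) :=
      ((tendsto_pow_atTop_nhds_zero_of_lt_one (by norm_num) (by norm_num)).comp (tendsto_add_atTop_nat 1)).const_mul R
    rw [mul_zero] at this
    refine this.congr fun k => ?_
    rw [one_div_pow]; ring
  have h1 : F x = ∫ z, φ z * F x := by rw [integral_mul_const, hφ1, one_mul]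
  rw [h1]
  unfold TT
  refine tendsto_integral_of_dominated_convergence (fun z => |φ z| * M 0) (fun k => ?_)
    (hφ.integrable.abs.mul_const _) (fun k => Eventually.of_forall fun z => ?_)
    (Eventually.of_forall fun z => ?_)
  · have h1 := hφ.1.continuous
    have h2 := hF.1.continuous
    exact Continuous.aestronglyMeasurable (by fun_prop)
  · rw [norm_mul, Real.norm_eq_abs]
    gcongr
    simpa using hF.2.2 0 (x - (R / 2 ^ (k + 1)) • z)
  · refine Tendsto.const_mul _ ?_
    have h3 : Tendsto (fun k : ℕ => x - (R / 2 ^ (k + 1)) • z) atTop (𝓝 (x - (0:ℝ) • z)) :=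
      tendsto_const_nhds.sub (h0.smul_const z)
    rw [zero_smul, sub_zero] at h3
    exact (hF.1.continuous.tendsto x).comp h3

theorem TT_tendsto_inf {φ : EE → ℝ} (hφ : RD φ) (hd : 2 ≤ d) {R : ℝ} (hR : 0 < R)
    {M : ℕ → ℝ} {F : EE → ℝ} (hF : SF R M F) (x : EE) :
    Tendsto (fun k : ℕ => TT φ F (R * 2 ^ k) x) atTop (𝓝 0) := by
  obtain ⟨C, hC0, hC⟩ := coarse_bound hφ 0 0
  have h0 : Tendsto (fun k : ℕ => C * M 0 * ((1/2 : ℝ) ^ k)) atTop (𝓝 (C * M 0 * 0)) :=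
      ((tendsto_pow_atTop_nhds_zero_of_lt_one (by norm_num) (by norm_num))).const_mul _
  rw [mul_zero] at h0
  refine squeeze_zero_norm (fun k => ?_) h0
  have hk : (1:ℝ) ≤ 2 ^ k := one_le_pow₀ (by norm_num)
  have h := hC R M F (R * 2 ^ k) x hR hF (by nlinarith)
  rw [norm_iteratedFDeriv_zero] at h
  refine h.trans ?_
  have hM := hF.M_nonneg hR 0
  simp only [pow_zero, mul_one]
  have : R ^ d * ((R * 2 ^ k) ^ d)⁻¹ ≤ (1/2) ^ k := by
    rw [mul_pow, mul_inv, ← mul_assoc, mul_inv_cancel₀ (by positivity), one_mul, one_div_pow, one_div]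
    gcongr
    exact le_self_pow₀ hk (by omega)
  calc _ = C * M 0 * (R ^ d * ((R * 2 ^ k) ^ d)⁻¹) := by ring
    _ ≤ _ := by gcongr

theorem TT_int' {g : EE → ℝ} (hgc : Continuous g) (hgi : Integrable g) {R : ℝ} {M : ℕ → ℝ} {F : EE → ℝ}
    (hF : SF R M F) (s : ℝ) (x : EE) :
    Integrable (fun z => g z * F (x - s • z)) := by
  refine (hgi.abs.mul_const (M 0)).mono' ?_ (Eventually.of_forall fun z => ?_)
  · have h2 := hF.1.continuous
    exact Continuous.aestronglyMeasurable (by fun_prop)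
  · rw [norm_mul, Real.norm_eq_abs]
    gcongr
    simpa using hF.2.2 0 (x - s • z)

theorem TT_int {g : EE → ℝ} (hg : RD g) {R : ℝ} {M : ℕ → ℝ} {F : EE → ℝ} (hF : SF R M F) (s : ℝ) (x : EE) :
    Integrable (fun z => g z * F (x - s • z)) :=
  TT_int' hg.1.continuous hg.integrable hF s x

theorem TT_scale (φ : EE → ℝ) {F : EE → ℝ} (s : ℝ) (x : EE) :
    TT (fun z => 2 ^ d * φ ((2:ℝ) • z)) F s x = TT φ F (s / 2) x := by
  unfold TT
  have := Measure.integral_comp_smul (μ := (volume : Measure EE))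
    (fun z => φ z * F (x - (s / 2) • z)) (2 : ℝ)
  rw [finrank_euclideanSpace_fin, abs_of_pos (by positivity), smul_eq_mul] at this
  have h2 : ∀ z : EE, 2 ^ d * φ ((2:ℝ) • z) * F (x - s • z) =
      2 ^ d * (φ ((2:ℝ) • z) * F (x - (s / 2) • ((2:ℝ) • z))) := by
    intro z
    rw [smul_smul, div_mul_cancel₀ _ (two_ne_zero), mul_assoc]
  simp only [h2]
  rw [integral_const_mul, this, mul_inv_cancel_left₀ (by positivity)]

theorem scale_system (hd : 2 ≤ d) (C : Fin N → Fin d → Fin N → Fin d → ℝ)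
    {g : Fin N → Fin N → EE → ℝ} {φ : EE → ℝ} (hg : ∀ i j, RD (g i j)) (hφ : RD φ)
    (hφ1 : ∫ x, φ x = 1)
    (hH : ∀ i m x, -(∑ a, ∑ j, ∑ b, C i a j b *
        pd (EuclideanSpace.single a 1) (pd (EuclideanSpace.single b 1) (g j m)) x) =
        if i = m then 2 ^ d * φ ((2:ℝ) • x) - φ x else 0)
    {R : ℝ} (hR : 0 < R) {M : ℕ → ℝ} {F : Fin N → EE → ℝ} (hF : ∀ m, SF R M (F m)) (i : Fin N) (x : EE) :
    HH C (fun j x => ∑ m, VV (g j m) (F m) R x) i x = F i x := by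
  have hVs : ∀ j m, ContDiff ℝ (⊤ : ℕ∞) (VV (g j m) (F m) R) := fun j m =>
    (VV_props (hg j m) hd hR (hF m)).1
  rw [HH_sum C Finset.univ (u := fun m j => VV (g j m) (F m) R) (fun m j => hVs j m)]
  -- linearity of the convolution in the kernel
  have hlin : ∀ m s, -(∑ a, ∑ j, ∑ b, C i a j b *
      TT (pd (EuclideanSpace.single a 1) (pd (EuclideanSpace.single b 1) (g j m))) (F m) s x) =
      if i = m then TT φ (F i) (s / 2) x - TT φ (F i) s x else 0 := by
    intro m s
    have h1 : -(∑ a, ∑ j, ∑ b, C i a j b *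
      TT (pd (EuclideanSpace.single a 1) (pd (EuclideanSpace.single b 1) (g j m))) (F m) s x) =
      ∫ z, (-(∑ a, ∑ j, ∑ b, C i a j b *
        pd (EuclideanSpace.single a 1) (pd (EuclideanSpace.single b 1) (g j m)) z)) * F m (x - s • z) := by
      have hi : ∀ a j b, Integrable (fun z => C i a j b *
        (pd (EuclideanSpace.single a 1) (pd (EuclideanSpace.single b 1) (g j m)) z * F m (x - s • z))) :=
        fun a j b => (TT_int (((hg j m).pd' _).pd' _) (hF m) s x).const_mul _
      have e : ∀ z, (-(∑ a, ∑ j, ∑ b, C i a j b *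
        pd (EuclideanSpace.single a 1) (pd (EuclideanSpace.single b 1) (g j m)) z)) * F m (x - s • z) =
        -(∑ a, ∑ j, ∑ b, C i a j b *
        (pd (EuclideanSpace.single a 1) (pd (EuclideanSpace.single b 1) (g j m)) z * F m (x - s • z))) := by
        intro z
        simp only [neg_mul, Finset.sum_mul, mul_assoc]
      simp only [e]
      rw [integral_neg]
      congr 1
      rw [integral_finsetSum _ fun a _ => integrable_finsetSum _ fun j _ => integrable_finsetSum _ fun b _ => hi a j b]
      refine Finset.sum_congr rfl fun a _ => ?_
      rw [integral_finsetSum _ fun j _ => integrable_finsetSum _ fun b _ => hi a j b]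
      refine Finset.sum_congr rfl fun j _ => ?_
      rw [integral_finsetSum _ fun b _ => hi a j b]
      refine Finset.sum_congr rfl fun b _ => ?_
      rw [integral_const_mul]; rfl
    rw [h1]
    simp only [hH]
    split_ifs with him
    · subst him
      have hφc := hφ.1.continuous
      have hφ2 : Continuous (fun x : EE => 2 ^ d * φ ((2:ℝ) • x)) := by fun_prop
      have hφ3 : Integrable (fun x : EE => 2 ^ d * φ ((2:ℝ) • x)) :=
        (hφ.integrable.comp_smul two_ne_zero).const_mul _
      rw [← TT_scale φ s x]
      unfold TT
      rw [← integral_sub (TT_int' hφ2 hφ3 (hF i) s x) (TT_int hφ (hF i) s x)]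
      simp only [sub_mul]
    · simp
  have hsum : HasSum (fun k : ℕ => ∑ m, -(∑ a, ∑ j, ∑ b, C i a j b *
      (TT (pd (EuclideanSpace.single a 1) (pd (EuclideanSpace.single b 1) (g j m))) (F m) (R * 2 ^ k) x +
       TT (pd (EuclideanSpace.single a 1) (pd (EuclideanSpace.single b 1) (g j m))) (F m) (R / 2 ^ (k+1)) x)))
      (∑ m, HH C (fun j => VV (g j m) (F m) R) i x) := by
    refine hasSum_sum fun m _ => HasSum.neg (hasSum_sum fun a _ => hasSum_sum fun j _ => hasSum_sum fun b _ =>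
      ((VV_props (hg j m) hd hR (hF m)).2.2 _ _ x).mul_left _)
  have e2 : ∀ k : ℕ, ∑ m, -(∑ a, ∑ j, ∑ b, C i a j b *
      (TT (pd (EuclideanSpace.single a 1) (pd (EuclideanSpace.single b 1) (g j m))) (F m) (R * 2 ^ k) x +
       TT (pd (EuclideanSpace.single a 1) (pd (EuclideanSpace.single b 1) (g j m))) (F m) (R / 2 ^ (k+1)) x)) =
      (TT φ (F i) (R / 2 ^ ((k + 1) + 1)) x - TT φ (F i) (R * 2 ^ k) x) -
      (TT φ (F i) (R / 2 ^ (k + 1)) x - TT φ (F i) (R * 2 ^ k / 2) x) := by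
    intro k
    have e3 : ∀ m, -(∑ a, ∑ j, ∑ b, C i a j b *
      (TT (pd (EuclideanSpace.single a 1) (pd (EuclideanSpace.single b 1) (g j m))) (F m) (R * 2 ^ k) x +
       TT (pd (EuclideanSpace.single a 1) (pd (EuclideanSpace.single b 1) (g j m))) (F m) (R / 2 ^ (k+1)) x)) =
       (if i = m then TT φ (F i) (R * 2 ^ k / 2) x - TT φ (F i) (R * 2 ^ k) x else 0) +
       (if i = m then TT φ (F i) (R / 2 ^ (k+1) / 2) x - TT φ (F i) (R / 2 ^ (k+1)) x else 0) := by
      intro m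
      rw [← hlin, ← hlin, ← neg_add]
      simp only [mul_add, Finset.sum_add_distrib]
    simp only [e3, Finset.sum_add_distrib, Finset.sum_ite_eq, Finset.mem_univ, if_true]
    rw [show R / 2 ^ (k+1) / 2 = R / 2 ^ (k + 1 + 1) by rw [pow_succ 2 (k+1), div_div]]
    ring
  simp only [e2] at hsum
  have hlim := hsum.tendsto_sum_nat
  have e4 : ∀ K : ℕ, ∑ k ∈ Finset.range K, ((TT φ (F i) (R / 2 ^ ((k + 1) + 1)) x - TT φ (F i) (R * 2 ^ k) x) -
      (TT φ (F i) (R / 2 ^ (k + 1)) x - TT φ (F i) (R * 2 ^ k / 2) x)) =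
      TT φ (F i) (R / 2 ^ (K + 1)) x - TT φ (F i) (R * 2 ^ K / 2) x := by
    intro K
    induction K with
    | zero => simp
    | succ K ih =>
      rw [Finset.sum_range_succ, ih, show R * 2 ^ (K+1) / 2 = R * 2 ^ K by ring]
      ring
  simp only [e4] at hlim
  have hlim2 : Tendsto (fun K : ℕ => TT φ (F i) (R / 2 ^ (K + 1)) x - TT φ (F i) (R * 2 ^ K / 2) x) atTop
      (𝓝 (F i x - 0)) := by
    refine (TT_tendsto_zero hφ hφ1 (hF i) x).sub ?_
    rw [← tendsto_add_atTop_iff_nat 1]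
    refine (TT_tendsto_inf hφ hd hR (hF i) x).congr fun K => ?_
    congr 1; ring
  rw [sub_zero] at hlim2
  exact tendsto_nhds_unique hlim hlim2

end system


section base

theorem summable_poly_half (α : ℕ) : Summable (fun l : ℕ => ((l:ℝ) + 1) ^ α * (1/2 : ℝ) ^ l) := by
  have h := (summable_nat_add_iff 1).2 (summable_pow_mul_geometric_of_norm_lt_one α
    (r := (1/2 : ℝ)) (by norm_num))
  refine (h.mul_left 2).congr fun l => ?_
  push_cast
  rw [pow_succ (1/2:ℝ)]; ring

theorem dyadic_term_le (α q : ℕ) (hq : 1 ≤ q) {r : ℝ} (hr : 0 ≤ r) (k : ℕ) :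
    ((k:ℝ) + 1) ^ α / (2 ^ k + r) ^ q ≤ ((k:ℝ) + 1) ^ α * (1/2 : ℝ) ^ k := by
  rw [div_eq_mul_inv, one_div_pow, one_div]
  gcongr
  calc (2:ℝ) ^ k ≤ 2 ^ k + r := by linarith
    _ ≤ _ := le_self_pow₀ (by have : (1:ℝ) ≤ 2 ^ k := one_le_pow₀ (by norm_num)
                              linarith) (by omega)

theorem dyadic_sum (α q : ℕ) (hq : 1 ≤ q) : ∃ C : ℝ, 0 ≤ C ∧ ∀ r : ℝ, 0 ≤ r →
    ∑' k : ℕ, ((k:ℝ) + 1) ^ α / (2 ^ k + r) ^ q ≤ C * Real.log (r + 2) ^ (α + 1) / (r + 2) ^ q := by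
  set S := ∑' l : ℕ, ((l:ℝ) + 1) ^ α * (1/2 : ℝ) ^ l with hS
  have hS0 : 0 ≤ S := tsum_nonneg fun l => by positivity
  refine ⟨2 ^ q * 2 ^ (α + 1) * (1 + 2 ^ (α + 1) * S), by positivity, fun r hr => ?_⟩
  set X := r + 2 with hX
  have hX2 : 2 ≤ X := by linarith
  obtain ⟨K, hK1, hK2⟩ := exists_nat_pow_near (x := X) (y := 2) (by linarith) (by norm_num)
  have hKpos : 1 ≤ K := by
    by_contra h
    have : K = 0 := by omega
    subst this; norm_num at hK2; linarith
  have hKL : (K:ℝ) ≤ 2 * Real.log X := by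
    have h1 : Real.log (2 ^ K) ≤ Real.log X := Real.log_le_log (by positivity) hK1
    rw [Real.log_pow] at h1
    have h2 : (1/2 : ℝ) ≤ Real.log 2 := by linarith [Real.log_two_gt_d9]
    have h3 : (0:ℝ) ≤ K := by positivity
    nlinarith
  have hsm : Summable (fun k : ℕ => ((k:ℝ) + 1) ^ α / (2 ^ k + r) ^ q) :=
    Summable.of_nonneg_of_le (fun k => by positivity) (fun k => dyadic_term_le α q hq hr k) (summable_poly_half α)
  rw [← hsm.sum_add_tsum_nat_add K]
  have hXq : 0 < X ^ q := by positivity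
  have hA : ∑ k ∈ Finset.range K, ((k:ℝ) + 1) ^ α / (2 ^ k + r) ^ q ≤ 2 ^ q / X ^ q * K ^ (α + 1) := by
    have : ∀ k ∈ Finset.range K, ((k:ℝ) + 1) ^ α / (2 ^ k + r) ^ q ≤ 2 ^ q / X ^ q * K ^ α := by
      intro k hk
      have hk' : (k:ℝ) + 1 ≤ K := by exact_mod_cast Finset.mem_range.1 hk
      have h1 : X / 2 ≤ 2 ^ k + r := by
        have : (1:ℝ) ≤ 2 ^ k := one_le_pow₀ (by norm_num)
        linarith
      calc _ ≤ (K:ℝ) ^ α / (X / 2) ^ q := by gcongr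
        _ = _ := by rw [div_pow]; field_simp
    refine (Finset.sum_le_sum this).trans (le_of_eq ?_)
    rw [Finset.sum_const, Finset.card_range, nsmul_eq_mul]; ring
  have hB : ∑' l : ℕ, (((l + K : ℕ):ℝ) + 1) ^ α / (2 ^ (l + K) + r) ^ q ≤
      2 ^ q / X ^ q * (2 * K) ^ (α + 1) * S := by
    rw [hS, ← tsum_mul_left]
    refine Summable.tsum_le_tsum (fun l => ?_) ((summable_nat_add_iff K).2 hsm) ((summable_poly_half α).mul_left _)
    have hK1' : (1:ℝ) ≤ K := by exact_mod_cast hKpos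
    have h1 : ((l + K : ℕ):ℝ) + 1 ≤ (2 * K) * (l + 1) := by
      push_cast
      have : (0:ℝ) ≤ l := by positivity
      nlinarith
    have h2 : X / 2 * 2 ^ l ≤ 2 ^ (l + K) + r := by
      rw [pow_add]
      have : X ≤ 2 * 2 ^ K := by rw [pow_succ] at hK2; linarith
      have h3 : (0:ℝ) < 2 ^ l := by positivity
      nlinarith
    calc _ ≤ ((2 * K) * ((l:ℝ) + 1)) ^ α / (X / 2 * 2 ^ l) ^ q := by gcongr
      _ = 2 ^ q / X ^ q * (2 * K) ^ α * (((l:ℝ) + 1) ^ α * (1 / (2 ^ l) ^ q)) := by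
        rw [mul_pow _ ((l:ℝ) + 1), mul_pow (X/2), div_pow]; field_simp
      _ ≤ 2 ^ q / X ^ q * (2 * K) ^ (α + 1) * (((l:ℝ) + 1) ^ α * (1 / 2) ^ l) := by
        rw [one_div_pow]
        gcongr
        · linarith
        · omega
        · exact le_self_pow₀ (one_le_pow₀ (by norm_num)) (by omega)
  have hL0 : 0 ≤ Real.log X := Real.log_nonneg (by linarith)
  calc _ ≤ 2 ^ q / X ^ q * K ^ (α + 1) + 2 ^ q / X ^ q * (2 * K) ^ (α + 1) * S := add_le_add hA hB
    _ = 2 ^ q / X ^ q * (1 + 2 ^ (α + 1) * S) * K ^ (α + 1) := by rw [mul_pow]; ring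
    _ ≤ 2 ^ q / X ^ q * (1 + 2 ^ (α + 1) * S) * (2 * Real.log X) ^ (α + 1) := by gcongr
    _ = _ := by rw [mul_pow]; ring

variable {d N : ℕ}
local notation "EE" => EuclideanSpace ℝ (Fin d)

/-- Symbol-type decay of order `-P` with logarithms. -/
def Sym (P α : ℕ) (f : EE → ℝ) : Prop :=
  ContDiff ℝ (⊤ : ℕ∞) f ∧ ∀ n, ∃ C : ℝ, ∀ x,
    ‖iteratedFDeriv ℝ n f x‖ ≤ C * Real.log (‖x‖ + 2) ^ α / (‖x‖ + 2) ^ (P + n)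

/-- Decay of the solution (derivatives of order at least one). -/
def SymG (P α : ℕ) (f : EE → ℝ) : Prop :=
  ContDiff ℝ (⊤ : ℕ∞) f ∧ ∀ n, 1 ≤ n → ∃ C : ℝ, ∀ x,
    ‖iteratedFDeriv ℝ n f x‖ ≤ C * Real.log (‖x‖ + 2) ^ α / (‖x‖ + 2) ^ (P + n - 2)

theorem cutoff_exists : ∃ ζ : ℕ → EE → ℝ, (∀ k, ContDiff ℝ (⊤ : ℕ∞) (ζ k)) ∧
    (∀ k x, 2 * 2 ^ k < ‖x‖ → ζ k x = 0) ∧ (∀ k x, ‖x‖ < 2 ^ k → ζ (k+1) x = 0) ∧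
    (∀ x, HasSum (fun k => ζ k x) 1) ∧
    ∀ n, ∃ B : ℝ, ∀ k x, ‖iteratedFDeriv ℝ n (ζ k) x‖ ≤ B / (2 ^ k) ^ n := by
  let θ : ContDiffBump (0 : EE) := ⟨1, 2, one_pos, one_lt_two⟩
  have hθs : ContDiff ℝ (⊤ : ℕ∞) (fun x : EE => θ x) := θ.contDiff
  let Θ : ℕ → EE → ℝ := fun k x => θ (((2:ℝ) ^ k)⁻¹ • x)
  have hΘs : ∀ k, ContDiff ℝ (⊤ : ℕ∞) (Θ k) := fun k => hθs.comp (contDiff_const_smul _)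
  have hnorm : ∀ k (x : EE), ‖((2:ℝ) ^ k)⁻¹ • x‖ = ‖x‖ / 2 ^ k := by
    intro k x; rw [norm_smul, norm_inv, norm_pow, Real.norm_ofNat]; ring
  have hΘ0 : ∀ k x, 2 * 2 ^ k ≤ ‖x‖ → Θ k x = 0 := by
    intro k x hx
    refine θ.zero_of_le_dist ?_
    rw [dist_zero_right, hnorm]
    change (2:ℝ) ≤ _
    rw [le_div_iff₀ (by positivity)]; exact hx
  have hΘ1 : ∀ k x, ‖x‖ ≤ 2 ^ k → Θ k x = 1 := by
    intro k x hx
    refine θ.one_of_mem_closedBall ?_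
    rw [mem_closedBall_zero_iff, hnorm]
    change _ ≤ (1:ℝ)
    rw [div_le_one (by positivity)]; exact hx
  let ζ : ℕ → EE → ℝ := fun k => match k with
    | 0 => Θ 0
    | (k+1) => fun x => Θ (k+1) x - Θ k x
  have hsum : ∀ K x, ∑ k ∈ Finset.range (K+1), ζ k x = Θ K x := by
    intro K x
    induction K with
    | zero => simp [ζ]
    | succ K ih => rw [Finset.sum_range_succ, ih]; simp [ζ]
  have hz0 : ∀ k x, 2 * 2 ^ k < ‖x‖ → ζ k x = 0 := by
    intro k x hx
    cases k with
    | zero => exact hΘ0 0 x hx.le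
    | succ k =>
      show Θ (k+1) x - Θ k x = 0
      rw [hΘ0 (k+1) x hx.le, hΘ0 k x (le_trans _ hx.le), sub_self]
      rw [pow_succ]; nlinarith [pow_pos (two_pos : (0:ℝ) < 2) k]
  have hz1 : ∀ k x, ‖x‖ < 2 ^ k → ζ (k+1) x = 0 := by
    intro k x hx
    show Θ (k+1) x - Θ k x = 0
    rw [hΘ1 (k+1) x (hx.le.trans _), hΘ1 k x hx.le, sub_self]
    rw [pow_succ]; nlinarith [pow_pos (two_pos : (0:ℝ) < 2) k]
  refine ⟨ζ, ?_, hz0, hz1, ?_, ?_⟩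
  · intro k
    cases k with
    | zero => exact hΘs 0
    | succ k => exact (hΘs (k+1)).sub (hΘs k)
  · intro x
    obtain ⟨K, hK⟩ := pow_unbounded_of_one_lt ‖x‖ (one_lt_two : (1:ℝ) < 2)
    have h1 : ∀ k ∉ Finset.range (K+1), ζ k x = 0 := by
      intro k hk
      have hk' : K + 1 ≤ k := by simpa using hk
      obtain ⟨l, rfl⟩ := Nat.exists_eq_add_of_le' (show 1 ≤ k by omega)
      refine hz1 l x (hK.trans_le ?_)
      exact pow_le_pow_right₀ (by norm_num) (by omega)
    have h2 : HasSum (fun k => ζ k x) (∑ k ∈ Finset.range (K+1), ζ k x) :=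
      hasSum_sum_of_ne_finset_zero h1
    rw [hsum, hΘ1 K x hK.le] at h2
    exact h2
  · intro n
    obtain ⟨D, hD⟩ : ∃ D, ∀ x : EE, ‖iteratedFDeriv ℝ n (fun x : EE => θ x) x‖ ≤ D := by
      have hc : Continuous (iteratedFDeriv ℝ n (fun x : EE => θ x)) :=
        hθs.continuous_iteratedFDeriv (by exact_mod_cast le_top)
      have hcs : HasCompactSupport (iteratedFDeriv ℝ n (fun x : EE => θ x)) :=
        θ.hasCompactSupport.iteratedFDeriv n
      exact hc.bounded_above_of_compact_support hcs
    have hD0 : 0 ≤ D := (norm_nonneg _).trans (hD 0)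
    have hΘb : ∀ k x, ‖iteratedFDeriv ℝ n (Θ k) x‖ ≤ D / (2 ^ k) ^ n := by
      intro k x
      have : iteratedFDeriv ℝ n (Θ k) x = (((2:ℝ) ^ k)⁻¹) ^ n • iteratedFDeriv ℝ n (fun x : EE => θ x) (((2:ℝ) ^ k)⁻¹ • x) :=
        congrFun (iteratedFDeriv_comp_const_smul _ (hθs.of_le (by exact_mod_cast le_top))) x
      rw [this, norm_smul, Real.norm_of_nonneg (by positivity), inv_pow, div_eq_inv_mul]
      gcongr
      exact hD _
    refine ⟨D + 2 ^ n * D, fun k x => ?_⟩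
    cases k with
    | zero =>
      refine (hΘb 0 x).trans ?_
      simp; positivity
    | succ k =>
      have : iteratedFDeriv ℝ n (ζ (k+1)) x = iteratedFDeriv ℝ n (Θ (k+1)) x - iteratedFDeriv ℝ n (Θ k) x :=
        iteratedFDeriv_sub_apply ((hΘs _).contDiffAt.of_le (by exact_mod_cast le_top))
          ((hΘs _).contDiffAt.of_le (by exact_mod_cast le_top))
      rw [this]
      refine (norm_sub_le _ _).trans ((add_le_add (hΘb _ x) (hΘb _ x)).trans (le_of_eq ?_))
      rw [pow_succ 2 k, mul_pow]
      field_simp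

theorem norm_iter_zero_of_eventually {f : EE → ℝ} {x : EE} (h : f =ᶠ[𝓝 x] 0) (n : ℕ) :
    iteratedFDeriv ℝ n f x = 0 := by
  rw [h.iteratedFDeriv ℝ n |>.eq_of_nhds]
  simp

theorem piece_SF {ζ : ℕ → EE → ℝ} (hζ : ∀ k, ContDiff ℝ (⊤ : ℕ∞) (ζ k))
    (hz0 : ∀ k x, 2 * 2 ^ k < ‖x‖ → ζ k x = 0) (hz1 : ∀ k x, ‖x‖ < 2 ^ k → ζ (k+1) x = 0)
    (hB : ∀ n, ∃ B : ℝ, ∀ k x, ‖iteratedFDeriv ℝ n (ζ k) x‖ ≤ B / (2 ^ k) ^ n)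
    {α : ℕ} {f : EE → ℝ} (hf : Sym d α f) :
    ∃ Cf : ℕ → ℝ, (∀ n, 0 ≤ Cf n) ∧ ∀ k : ℕ, SF (2 ^ k) (fun n => Cf n * ((k:ℝ)+1) ^ α / (2 ^ k) ^ d)
      (fun y => f y * ζ k y) := by
  choose A hA using hf.2
  choose B hB using hB
  have hAn : ∀ n, ∀ i ≤ n, A i ≤ ∑ i ∈ Finset.range (n+1), |A i| := fun n i hi =>
    (le_abs_self _).trans (Finset.single_le_sum (f := fun i => |A i|) (fun _ _ => abs_nonneg _)
      (Finset.mem_range.2 (by omega)))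
  have hBn : ∀ n, ∀ i ≤ n, B i ≤ ∑ i ∈ Finset.range (n+1), |B i| := fun n i hi =>
    (le_abs_self _).trans (Finset.single_le_sum (f := fun i => |B i|) (fun _ _ => abs_nonneg _)
      (Finset.mem_range.2 (by omega)))
  set AA : ℕ → ℝ := fun n => ∑ i ∈ Finset.range (n+1), |A i|
  set BB : ℕ → ℝ := fun n => ∑ i ∈ Finset.range (n+1), |B i|
  have hAA : ∀ n, 0 ≤ AA n := fun n => Finset.sum_nonneg fun _ _ => abs_nonneg _
  have hBB : ∀ n, 0 ≤ BB n := fun n => Finset.sum_nonneg fun _ _ => abs_nonneg _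
  refine ⟨fun n => 2 ^ n * (AA n * 2 ^ α * 2 ^ (d + n)) * BB n, fun n => by
    have := hAA n; have := hBB n; positivity, fun k => ⟨hf.1.mul (hζ k), ?_, ?_⟩⟩
  · intro x hx
    simp [hz0 k x hx]
  intro n x
  have hA0 := hAA n
  have hB0 := hBB n
  have h2k : (0:ℝ) < 2 ^ k := by positivity
  have h2k1 : (1:ℝ) ≤ 2 ^ k := one_le_pow₀ (by norm_num)
  by_cases hact : ‖x‖ ≤ 2 * 2 ^ k ∧ (2:ℝ) ^ k ≤ 2 * (‖x‖ + 2)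
  · obtain ⟨ha, hb⟩ := hact
    have hx0 := norm_nonneg x
    have hlog0 : 0 ≤ Real.log (‖x‖ + 2) := Real.log_nonneg (by linarith)
    have hlog : Real.log (‖x‖ + 2) ≤ 2 * ((k:ℝ) + 1) := by
      have h1 : ‖x‖ + 2 ≤ 2 ^ (k + 2) := by rw [pow_add]; linarith
      have h2 := Real.log_le_log (by linarith) h1
      rw [Real.log_pow] at h2
      have h3 : Real.log 2 ≤ 1 := by
        have := Real.log_le_sub_one_of_pos (show (0:ℝ) < 2 by norm_num); linarith
      push_cast at h2
      nlinarith [(Nat.cast_nonneg k : (0:ℝ) ≤ k)]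
    have h1 : ∀ i ≤ n, ‖iteratedFDeriv ℝ i f x‖ ≤
        (AA n * 2 ^ α * 2 ^ (d + n) * ((k:ℝ)+1) ^ α / (2 ^ k) ^ d) / (2 ^ k) ^ i := by
      intro i hi
      refine (hA i x).trans ?_
      have e1 : A i * Real.log (‖x‖ + 2) ^ α ≤ AA n * (2 * ((k:ℝ) + 1)) ^ α :=
        mul_le_mul (hAn n i hi) (by gcongr) (by positivity) hA0
      have e2 : ((2:ℝ) ^ k) ^ (d + i) ≤ 2 ^ (d + n) * (‖x‖ + 2) ^ (d + i) := by
        calc ((2:ℝ) ^ k) ^ (d + i) ≤ (2 * (‖x‖ + 2)) ^ (d + i) := by gcongr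
          _ = 2 ^ (d + i) * (‖x‖ + 2) ^ (d + i) := mul_pow _ _ _
          _ ≤ _ := by gcongr; norm_num
      rw [div_div, ← pow_add]
      refine (div_le_div_of_nonneg_right e1 (by positivity)).trans ?_
      rw [div_le_div_iff₀ (by positivity) (by positivity), mul_pow]
      calc AA n * (2 ^ α * ((k:ℝ) + 1) ^ α) * ((2:ℝ) ^ k) ^ (d + i) ≤
          AA n * (2 ^ α * ((k:ℝ) + 1) ^ α) * (2 ^ (d + n) * (‖x‖ + 2) ^ (d + i)) := by gcongr
        _ = _ := by ring
    have h2 : ∀ i ≤ n, ‖iteratedFDeriv ℝ i (ζ k) x‖ ≤ BB n / (2 ^ k) ^ i := by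
      intro i hi
      refine (hB i k x).trans ?_
      gcongr
      exact hBn n i hi
    refine (prod_bound hf.1 (hζ k) (by positivity) h2k h1 h2).trans (le_of_eq ?_)
    ring
  · have : (fun y => f y * ζ k y) =ᶠ[𝓝 x] 0 := by
      rw [not_and_or] at hact
      rcases hact with h | h
      · push Not at h
        filter_upwards [(isOpen_lt continuous_const continuous_norm).mem_nhds h] with y hy
        simp [hz0 k y hy]
      · push Not at h
        cases k with
        | zero =>
          have := norm_nonneg x
          norm_num at h; linarith
        | succ l =>
          have : ‖x‖ < 2 ^ l := by rw [pow_succ] at h; linarith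
          filter_upwards [(isOpen_lt continuous_norm continuous_const).mem_nhds this] with y hy
          simp [hz1 l y hy]
    rw [norm_iter_zero_of_eventually this, norm_zero]
    positivity

theorem norm_iter_sum_le {ι : Type*} (s : Finset ι) {f : ι → EE → ℝ}
    (hf : ∀ i, ContDiff ℝ (⊤ : ℕ∞) (f i)) (n : ℕ) (x : EE) :
    ‖iteratedFDeriv ℝ n (fun x => ∑ i ∈ s, f i x) x‖ ≤ ∑ i ∈ s, ‖iteratedFDeriv ℝ n (f i) x‖ := by
  have : iteratedFDeriv ℝ n (fun x => ∑ i ∈ s, f i x) x = ∑ i ∈ s, iteratedFDeriv ℝ n (f i) x := by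
    rw [iteratedFDeriv_sum fun i _ => (hf i).of_le (by exact_mod_cast le_top)]
    simp
  rw [this]
  exact norm_sum_le _ _

theorem base_solve (hd : 2 ≤ d) (C : Fin N → Fin d → Fin N → Fin d → ℝ)
    (hLH : ∀ (ξ : Fin N → ℝ) (η : Fin d → ℝ), ξ ≠ 0 → η ≠ 0 →
      0 < ∑ i, ∑ a, ∑ j, ∑ b, C i a j b * ξ i * η a * ξ j * η b)
    (α : ℕ) (f : Fin N → EE → ℝ) (hf : ∀ i, Sym d α (f i)) :
    ∃ u : Fin N → EE → ℝ, (∀ j, SymG d (α+1) (u j)) ∧ ∀ i x, HH C u i x = f i x := by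
  obtain ⟨g, φ, hg, hφ, hφ1, hH⟩ := kernel_exists C hLH
  obtain ⟨ζ, hζ, hz0, hz1, hzs, hB⟩ := cutoff_exists (d := d)
  choose Cf hCf0 hCf using fun i => piece_SF hζ hz0 hz1 hB (hf i)
  set CC : ℕ → ℝ := fun n => ∑ i, Cf i n with hCC
  have hCC0 : ∀ n, 0 ≤ CC n := fun n => Finset.sum_nonneg fun i _ => hCf0 i n
  have hSF : ∀ (k : ℕ) i, SF (2 ^ k) (fun n => CC n * ((k:ℝ)+1) ^ α / (2 ^ k) ^ d)
      (fun y => f i y * ζ k y) := fun k i => by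
    refine ⟨(hCf i k).1, (hCf i k).2.1, fun n x => ((hCf i k).2.2 n x).trans ?_⟩
    change (Cf i n * ((k:ℝ)+1) ^ α / (2 ^ k) ^ d) / _ ≤ (CC n * ((k:ℝ)+1) ^ α / (2 ^ k) ^ d) / _
    gcongr
    exact Finset.single_le_sum (f := fun i => Cf i n) (fun i _ => hCf0 i n) (Finset.mem_univ i)
  set W : ℕ → Fin N → EE → ℝ := fun k j x => ∑ m, VV (g j m) (fun y => f m y * ζ k y) (2 ^ k) x with hW
  have hVs : ∀ k j m, ContDiff ℝ (⊤ : ℕ∞) (VV (g j m) (fun y => f m y * ζ k y) (2 ^ k)) := fun k j m =>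
    (VV_props (hg j m) hd (by positivity) (hSF k m)).1
  have hWs : ∀ k j, ContDiff ℝ (⊤ : ℕ∞) (W k j) := fun k j => ContDiff.sum fun m _ => hVs k j m
  have hW0 : ∀ k j, W k j 0 = 0 := by
    intro k j; simp [hW, VV]
  have hWb : ∀ j n, ∃ D : ℝ, 0 ≤ D ∧ (1 ≤ n → ∀ k x, ‖iteratedFDeriv ℝ n (W k j) x‖ ≤
      D * (((k:ℝ)+1) ^ α / (2 ^ k + ‖x‖) ^ (d + n - 2))) := by
    intro j n
    by_cases hn : 1 ≤ n
    swap
    · exact ⟨0, le_rfl, fun h => absurd h hn⟩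
    choose D hD0 hD using fun m => VV_bound (hg j m) hd n (d + n - 2) (by omega) hn
    refine ⟨∑ m, D m * (CC 0 + CC n), Finset.sum_nonneg fun m _ =>
      mul_nonneg (hD0 m) (add_nonneg (hCC0 _) (hCC0 _)), fun _ k x => ?_⟩
    refine (norm_iter_sum_le _ (hVs k j) n x).trans ?_
    rw [Finset.sum_mul]
    refine Finset.sum_le_sum fun m _ => ?_
    refine (hD m _ _ _ x (by positivity) (hSF k m)).trans (le_of_eq ?_)
    field_simp
  choose D hD0 hD using hWb
  have hser := fun j => series_lemma (f := fun k => W k j) (fun k => hWs k j) (fun k => hW0 k j)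
    (fun n k => D j n * (((k:ℝ)+1) ^ α * (1/2) ^ k)) (fun n _ => (summable_poly_half α).mul_left _)
    (fun n hn k x => (hD j n hn k x).trans (by
      have := hD0 j n
      gcongr
      exact dyadic_term_le α _ (by omega) (norm_nonneg x) k))
  refine ⟨fun j x => ∑' k, W k j x, fun j => ⟨(hser j).1, fun n hn => ?_⟩, fun i x => ?_⟩
  · obtain ⟨K, hK0, hK⟩ := dyadic_sum α (d + n - 2) (by omega)
    refine ⟨D j n * K, fun x => ((hser j).2.1 n hn x).trans ?_⟩
    have hs : Summable fun k : ℕ => ((k:ℝ)+1) ^ α / (2 ^ k + ‖x‖) ^ (d + n - 2) := by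
      refine Summable.of_nonneg_of_le (fun k => by positivity)
        (fun k => dyadic_term_le α _ (by omega) (norm_nonneg x) k) (summable_poly_half α)
    have hs2 : Summable fun k : ℕ => ‖iteratedFDeriv ℝ n (W k j) x‖ :=
      Summable.of_nonneg_of_le (fun k => norm_nonneg _) (fun k => hD j n hn k x) (hs.mul_left _)
    refine (hs2.tsum_le_tsum (fun k => hD j n hn k x) (hs.mul_left _)).trans ?_
    rw [tsum_mul_left, mul_assoc, mul_div_assoc]
    have := hD0 j n
    gcongr
    exact hK _ (norm_nonneg x)
  · have h1 : HasSum (fun k => HH C (W k) i x) (HH C (fun j x => ∑' k, W k j x) i x) := by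
      unfold HH
      refine HasSum.neg (hasSum_sum fun a _ => hasSum_sum fun j _ => hasSum_sum fun b _ => ?_)
      exact ((hser j).2.2 _ _ x).mul_left _
    have h2 : ∀ k, HH C (W k) i x = f i x * ζ k x := fun k =>
      scale_system hd C hg hφ hφ1 hH (by positivity) (hSF k) i x
    simp_rw [h2] at h1
    have h3 := (hzs x).mul_left (f i x)
    rw [mul_one] at h3
    exact h1.unique h3

end base


/-- Uniform majorant of finitely many constants. -/
def PK (A : ℕ → ℝ) (n : ℕ) : ℝ := ∑ i ∈ Finset.range (n+1), |A i|

theorem PK_nonneg (A : ℕ → ℝ) (n : ℕ) : 0 ≤ PK A n := Finset.sum_nonneg fun _ _ => abs_nonneg _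

theorem le_PK (A : ℕ → ℝ) {n i : ℕ} (hi : i ≤ n) : A i ≤ PK A n :=
  (le_abs_self _).trans (Finset.single_le_sum (f := fun i => |A i|) (fun _ _ => abs_nonneg _)
      (Finset.mem_range.2 (by omega)))

theorem log_pow_le (α : ℕ) : ∃ K : ℝ, 0 ≤ K ∧ ∀ t : ℝ, 1 ≤ t →
    (1 + 2 * Real.log t) ^ α ≤ K * t ^ (1/2 : ℝ) := by
  set ε : ℝ := 1 / (2 * ((α:ℝ) + 1)) with hε
  have hε0 : 0 < ε := by positivity
  refine ⟨(1 + 2 / ε) ^ α, by positivity, fun t ht => ?_⟩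
  have hl0 := Real.log_nonneg ht
  have h1 : 1 + 2 * Real.log t ≤ (1 + 2 / ε) * t ^ ε := by
    have e1 := Real.log_le_rpow_div (by linarith : 0 ≤ t) hε0
    have e2 := Real.one_le_rpow ht hε0.le
    calc 1 + 2 * Real.log t ≤ t ^ ε + 2 * (t ^ ε / ε) := by linarith
      _ = _ := by ring
  calc (1 + 2 * Real.log t) ^ α ≤ ((1 + 2 / ε) * t ^ ε) ^ α := by gcongr
    _ = (1 + 2 / ε) ^ α * t ^ (ε * α) := by
        rw [mul_pow, ← Real.rpow_natCast (t ^ ε), ← Real.rpow_mul (by linarith)]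
    _ ≤ _ := by
        gcongr
        rw [hε, div_mul_eq_mul_div, one_mul, div_le_div_iff₀ (by positivity) (by norm_num)]
        linarith

section step
variable {d N : ℕ}
local notation "EE" => EuclideanSpace ℝ (Fin d)

theorem cutoff_one {a b : ℝ} (ha : 0 < a) (hab : a < b) : ∃ χ : EE → ℝ, ContDiff ℝ (⊤ : ℕ∞) χ ∧
    (∀ x, ‖x‖ ≤ a → χ x = 0) ∧ (∀ x, b ≤ ‖x‖ → χ x = 1) ∧
    ∀ n, ∃ B : ℝ, ∀ x, ‖iteratedFDeriv ℝ n χ x‖ ≤ B / (‖x‖ + 2) ^ n := by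
  let θ : ContDiffBump (0 : EE) := ⟨a, b, ha, hab⟩
  have hθs : ContDiff ℝ (⊤ : ℕ∞) (fun x : EE => θ x) := θ.contDiff
  have hχs : ContDiff ℝ (⊤ : ℕ∞) (fun x : EE => 1 - θ x) := contDiff_const.sub hθs
  have h1 : ∀ x : EE, b ≤ ‖x‖ → 1 - θ x = 1 := by
    intro x hx
    rw [θ.zero_of_le_dist (by rw [dist_zero_right]; exact hx), sub_zero]
  refine ⟨fun x => 1 - θ x, hχs, ?_, h1, ?_⟩
  · intro x hx
    have : θ x = 1 := θ.one_of_mem_closedBall (by rw [mem_closedBall_zero_iff]; exact hx)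
    simp [this]
  · intro n
    have hc : Continuous (iteratedFDeriv ℝ n (fun x : EE => 1 - θ x)) :=
      hχs.continuous_iteratedFDeriv (by exact_mod_cast le_top)
    obtain ⟨D, hD⟩ := (isCompact_closedBall (0:EE) b).exists_bound_of_continuousOn hc.continuousOn
    have hb : 0 < b := ha.trans hab
    have hD0 : 0 ≤ D := (norm_nonneg _).trans (hD 0 (by simp [hb.le]))
    refine ⟨D * (b + 2) ^ n + 1, fun x => ?_⟩
    have hx0 := norm_nonneg x
    rw [le_div_iff₀ (by positivity)]
    rcases le_or_gt ‖x‖ b with hx | hx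
    · have := hD x (by simpa using hx)
      have h2 : ‖iteratedFDeriv ℝ n (fun x : EE => 1 - θ x) x‖ * (‖x‖ + 2) ^ n ≤ D * (b + 2) ^ n := by
        gcongr
      linarith
    · have hev : (fun x : EE => 1 - θ x) =ᶠ[𝓝 x] fun _ => 1 := by
        filter_upwards [(isOpen_lt continuous_const continuous_norm).mem_nhds hx] with y hy
        exact h1 y (le_of_lt hy)
      rw [(hev.iteratedFDeriv ℝ n).eq_of_nhds]
      have hp : 0 ≤ D * (b + 2) ^ n := by positivity
      cases n with
      | zero => simpa using hD0
      | succ n => rw [iteratedFDeriv_succ_const]; simp; positivity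

theorem clm_iter (L : EE →L[ℝ] ℝ) (n : ℕ) (x : EE) :
    ‖iteratedFDeriv ℝ n (fun y => L y) x‖ ≤ (‖L‖ * (‖x‖ + 2)) / (‖x‖ + 2) ^ n := by
  have hx := norm_nonneg x
  have hL := norm_nonneg L
  match n with
  | 0 =>
    rw [norm_iteratedFDeriv_zero, pow_zero, div_one]
    refine (L.le_opNorm x).trans ?_
    gcongr; linarith
  | 1 =>
    rw [norm_iteratedFDeriv_one, pow_one]
    rw [mul_div_assoc, div_self (by positivity), mul_one]
    exact le_of_eq (by rw [show (fun y => L y) = ⇑L from rfl, L.fderiv])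
  | (n+2) =>
    rw [← norm_iteratedFDeriv_fderiv]
    have : fderiv ℝ (fun y => L y) = fun _ => L := by funext y; exact L.fderiv
    rw [this, iteratedFDeriv_succ_const]
    simp; positivity

theorem ray_bound {p α : ℕ} (hd : 2 ≤ d) {f : EE → ℝ} (hf : Sym (d + p + 1) α f)
    {χ : EE → ℝ} (hχ : ContDiff ℝ (⊤ : ℕ∞) χ) {a : ℝ} (ha : 0 < a) (hχ0 : ∀ x, ‖x‖ ≤ a → χ x = 0)
    (hχB : ∀ n, ∃ B : ℝ, ∀ x, ‖iteratedFDeriv ℝ n χ x‖ ≤ B / (‖x‖ + 2) ^ n) (n : ℕ) :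
    ∃ D : ℝ, 0 ≤ D ∧ ∀ t : ℝ, 1 ≤ t → ∀ x : EE,
      ‖iteratedFDeriv ℝ n (fun x => t ^ (d-1) * (f (t • x) * χ x)) x‖ ≤
        t ^ (-3/2 : ℝ) * (D * Real.log (‖x‖ + 2) ^ α / (‖x‖ + 2) ^ (d + p + 1 + n)) := by
  choose A hA using hf.2
  choose B hB using hχB
  obtain ⟨K, hK0, hK⟩ := log_pow_le α
  set c : ℝ := a / (a + 2) with hc
  have hc0 : 0 < c := by positivity
  have hc1 : c ≤ 1 := by rw [hc, div_le_one (by positivity)]; linarith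
  set Q := d + p + 1 with hQ
  have hA0 := PK_nonneg A n
  have hB0 := PK_nonneg B n
  refine ⟨2 ^ n * (PK A n * K / c ^ (Q + n)) * PK B n, by positivity, fun t ht x => ?_⟩
  have ht0 : 0 < t := by linarith
  have hx0 := norm_nonneg x
  have hlog0 : 0 ≤ Real.log (‖x‖ + 2) := Real.log_nonneg (by linarith)
  have hfts : ContDiff ℝ (⊤ : ℕ∞) (fun x => f (t • x)) := hf.1.comp (contDiff_const_smul t)
  rcases lt_or_ge ‖x‖ a with hx | hx
  · have : (fun x => t ^ (d-1) * (f (t • x) * χ x)) =ᶠ[𝓝 x] 0 := by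
      filter_upwards [(isOpen_lt continuous_norm continuous_const).mem_nhds hx] with y hy
      simp [hχ0 y (le_of_lt hy)]
    rw [norm_iter_zero_of_eventually this, norm_zero]
    positivity
  have h1 : ∀ i ≤ n, ‖iteratedFDeriv ℝ i (fun x => f (t • x)) x‖ ≤
      ((PK A n * K / c ^ (Q + n)) * (t ^ (1/2 : ℝ) / t ^ Q) * (Real.log (‖x‖ + 2) ^ α / (‖x‖ + 2) ^ Q)) /
        (‖x‖ + 2) ^ i := by
    intro i hi
    rw [congrFun (iteratedFDeriv_comp_const_smul t (hf.1.of_le (by exact_mod_cast le_top))) x, norm_smul,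
      Real.norm_of_nonneg (by positivity)]
    have e1 : c * (t * (‖x‖ + 2)) ≤ ‖t • x‖ + 2 := by
      rw [norm_smul, Real.norm_of_nonneg ht0.le]
      have : c * (‖x‖ + 2) ≤ ‖x‖ := by
        rw [hc, div_mul_eq_mul_div, div_le_iff₀ (by positivity)]; nlinarith
      nlinarith
    have e2 : Real.log (‖t • x‖ + 2) ≤ (1 + 2 * Real.log t) * Real.log (‖x‖ + 2) := by
      have l1 : Real.log (‖t • x‖ + 2) ≤ Real.log (t * (‖x‖ + 2)) := by
        apply Real.log_le_log (by positivity)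
        rw [norm_smul, Real.norm_of_nonneg ht0.le]; nlinarith
      rw [Real.log_mul (by positivity) (by positivity)] at l1
      have l2 : Real.log 2 ≤ Real.log (‖x‖ + 2) := Real.log_le_log (by norm_num) (by linarith)
      have l3 := Real.log_two_gt_d9
      nlinarith [Real.log_nonneg ht]
    have e2' : 0 ≤ Real.log (‖t • x‖ + 2) := Real.log_nonneg (by linarith [norm_nonneg (t • x)])
    have e3 : Real.log (‖t • x‖ + 2) ^ α ≤ K * t ^ (1/2 : ℝ) * Real.log (‖x‖ + 2) ^ α := by
      calc _ ≤ ((1 + 2 * Real.log t) * Real.log (‖x‖ + 2)) ^ α := by gcongr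
        _ = (1 + 2 * Real.log t) ^ α * Real.log (‖x‖ + 2) ^ α := mul_pow _ _ _
        _ ≤ _ := by gcongr; exact hK t ht
    have e4 : ‖iteratedFDeriv ℝ i f (t • x)‖ ≤
        PK A n * (K * t ^ (1/2 : ℝ) * Real.log (‖x‖ + 2) ^ α) / (c * (t * (‖x‖ + 2))) ^ (Q + i) := by
      refine (hA i (t • x)).trans ?_
      refine div_le_div₀ (by positivity) ?_ (by positivity) (by gcongr)
      exact mul_le_mul (le_PK A hi) e3 (by positivity) hA0
    have e5 : 1 / c ^ (Q + i) ≤ 1 / c ^ (Q + n) := by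
      apply one_div_le_one_div_of_le (by positivity)
      exact pow_le_pow_of_le_one hc0.le hc1 (by omega)
    calc t ^ i * ‖iteratedFDeriv ℝ i f (t • x)‖ ≤ t ^ i *
          (PK A n * (K * t ^ (1/2 : ℝ) * Real.log (‖x‖ + 2) ^ α) / (c * (t * (‖x‖ + 2))) ^ (Q + i)) := by gcongr
      _ = (PK A n * K * (t ^ (1/2 : ℝ) / t ^ Q) * (Real.log (‖x‖ + 2) ^ α / (‖x‖ + 2) ^ Q)) /
        (‖x‖ + 2) ^ i * (1 / c ^ (Q + i)) := by
          rw [mul_pow, mul_pow, pow_add t, pow_add (‖x‖ + 2)]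
          field_simp
      _ ≤ (PK A n * K * (t ^ (1/2 : ℝ) / t ^ Q) * (Real.log (‖x‖ + 2) ^ α / (‖x‖ + 2) ^ Q)) /
        (‖x‖ + 2) ^ i * (1 / c ^ (Q + n)) := by gcongr
      _ = _ := by ring
  have h2 : ∀ i ≤ n, ‖iteratedFDeriv ℝ i χ x‖ ≤ PK B n / (‖x‖ + 2) ^ i := by
    intro i hi
    refine (hB i x).trans ?_
    gcongr
    exact le_PK B hi
  have h3 := prod_bound hfts hχ (by positivity) (by positivity) h1 h2
  have h4 : iteratedFDeriv ℝ n (fun x => t ^ (d-1) * (f (t • x) * χ x)) x =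
      t ^ (d-1) • iteratedFDeriv ℝ n (fun x => f (t • x) * χ x) x :=
    iteratedFDeriv_const_smul_apply (f := fun x => f (t • x) * χ x) (a := t ^ (d-1)) ((hfts.mul hχ).contDiffAt.of_le (by exact_mod_cast le_top))
  rw [h4, norm_smul, Real.norm_of_nonneg (by positivity)]
  have h5 : t ^ (d-1) * (t ^ (1/2 : ℝ) / t ^ Q) ≤ t ^ (-3/2 : ℝ) := by
    have e1 : (t ^ (-3/2 : ℝ)) = t ^ (1/2 : ℝ) / t ^ 2 := by
      rw [← Real.rpow_natCast t 2, ← Real.rpow_sub ht0]; norm_num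
    have e2 : t ^ Q = t ^ (d - 1) * t ^ (p + 2) := by
      rw [← pow_add]; congr 1; omega
    rw [e1, e2]
    have e3 : t ^ (d-1) * (t ^ (1/2 : ℝ) / (t ^ (d - 1) * t ^ (p + 2))) = t ^ (1/2 : ℝ) / t ^ (p+2) := by
      field_simp
    rw [e3]
    gcongr
    omega
  calc _ ≤ t ^ (d-1) * (2 ^ n * ((PK A n * K / c ^ (Q + n)) * (t ^ (1/2 : ℝ) / t ^ Q) *
        (Real.log (‖x‖ + 2) ^ α / (‖x‖ + 2) ^ Q)) * PK B n / (‖x‖ + 2) ^ n) := by gcongr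
    _ = (t ^ (d-1) * (t ^ (1/2 : ℝ) / t ^ Q)) * (2 ^ n * (PK A n * K / c ^ (Q + n)) * PK B n *
        Real.log (‖x‖ + 2) ^ α / (‖x‖ + 2) ^ (Q + n)) := by
        rw [pow_add (‖x‖ + 2) Q n]; field_simp
    _ ≤ _ := by gcongr

theorem radial_deriv (hd : 2 ≤ d) {f h : EE → ℝ} (hf : ContDiff ℝ (⊤ : ℕ∞) f) (hh : ContDiff ℝ (⊤ : ℕ∞) h)
    {ρ : ℝ} (hρ : 0 < ρ) (hIntg : ∀ x, ρ ≤ ‖x‖ → IntegrableOn (fun t : ℝ => t ^ (d-1) * f (t • x)) (Set.Ioi 1))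
    (hhf : ∀ x, ρ ≤ ‖x‖ → h x = ∫ t in Set.Ioi 1, t ^ (d-1) * f (t • x)) {x : EE} (hx : ρ < ‖x‖) :
    d * h x + fderiv ℝ h x x = - f x := by
  set ψ : ℝ → ℝ := fun t => t ^ (d-1) * f (t • x) with hψ
  have hψc : Continuous ψ := by
    have := hf.continuous
    fun_prop
  have hI : IntegrableOn ψ (Set.Ioi 1) := hIntg x hx.le
  have hIs : ∀ s : ℝ, IntegrableOn ψ (Set.Ioi s) := by
    intro s
    have h1 : IntegrableOn ψ (Set.Icc s 1 ∪ Set.Ioi 1) := hψc.integrableOn_Icc.union hI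
    refine h1.mono_set fun y hy => ?_
    rcases le_or_gt y 1 with h | h
    · exact Or.inl ⟨le_of_lt hy, h⟩
    · exact Or.inr h
  -- the key identity for scalings close to one
  have hev : (fun s : ℝ => s ^ d * h (s • x)) =ᶠ[𝓝 1] fun s => (∫ t in Set.Ioi 1, ψ t) - ∫ t in (1:ℝ)..s, ψ t := by
    have h0 : ∀ᶠ s : ℝ in 𝓝 1, 0 < s := lt_mem_nhds one_pos
    have h1 : ∀ᶠ s : ℝ in 𝓝 1, ρ < ‖s • x‖ := by
      have hc : Continuous fun s : ℝ => ‖s • x‖ := by fun_prop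
      exact (isOpen_lt continuous_const hc).mem_nhds (by simpa using hx)
    filter_upwards [h0, h1] with s hs0 hs1
    have e1 := intervalIntegral.integral_interval_add_Ioi (hIs 1) (hIs s)
    have e2 := integral_comp_mul_left_Ioi ψ 1 hs0
    rw [mul_one, smul_eq_mul] at e2
    have e3 : ∀ t, ψ (s * t) = s ^ (d-1) * (t ^ (d-1) * f (t • s • x)) := by
      intro t
      simp only [hψ, smul_smul, mul_pow, mul_comm t s]
      ring
    simp_rw [e3] at e2
    rw [integral_const_mul, ← hhf _ hs1.le] at e2
    have e4 : s ^ d * h (s • x) = ∫ t in Set.Ioi s, ψ t := by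
      have : s ^ d = s * s ^ (d-1) := by rw [← pow_succ']; congr 1; omega
      rw [this, mul_assoc, e2]
      field_simp
    rw [e4]; linarith
  have hd1 : HasDerivAt (fun s => (∫ t in Set.Ioi 1, ψ t) - ∫ t in (1:ℝ)..s, ψ t) (- ψ 1) 1 := by
    have := intervalIntegral.integral_hasDerivAt_right (hψc.intervalIntegrable 1 1)
      hψc.stronglyMeasurable.stronglyMeasurableAtFilter hψc.continuousAt
    exact this.const_sub _
  have hd2 : HasDerivAt (fun s : ℝ => s ^ d * h (s • x))
      ((d * (1:ℝ) ^ (d-1)) * h ((1:ℝ) • x) + (1:ℝ) ^ d * fderiv ℝ h ((1:ℝ) • x) x) 1 := by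
    have g1 : HasDerivAt (fun s : ℝ => s • x) x 1 := by
      simpa using (hasDerivAt_id (1:ℝ)).smul_const x
    have g2 : HasFDerivAt h (fderiv ℝ h ((1:ℝ) • x)) ((1:ℝ) • x) :=
      ((hh.differentiable (by norm_num)) _).hasFDerivAt
    exact (hasDerivAt_pow d (1:ℝ)).mul (g2.comp_hasDerivAt (1:ℝ) g1)
  have := (hd1.congr_of_eventuallyEq hev).unique hd2
  simp [hψ] at this
  linarith

theorem sum_coord_single (x : EE) : ∑ a, x a • (EuclideanSpace.single a (1:ℝ) : EE) = x := by
  have := (EuclideanSpace.basisFun (Fin d) ℝ).sum_repr x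
  simpa using this

theorem divergence_form {p α : ℕ} (hd : 2 ≤ d) {f : EE → ℝ} (hf : Sym (d + p + 1) α f) {ρ : ℝ} (hρ : 0 < ρ) :
    ∃ F : Fin d → EE → ℝ, (∀ a, Sym (d + p) α (F a)) ∧
      ∀ x, ρ < ‖x‖ → ∑ a, pd (EuclideanSpace.single a 1) (F a) x = f x := by
  obtain ⟨χ, hχ, hχ0, hχ1, hχB⟩ := cutoff_one (d := d) (half_pos hρ) (half_lt_self hρ)
  choose D hD0 hD using ray_bound hd hf hχ (half_pos hρ) hχ0 hχB
  obtain ⟨K, hK0, hK⟩ := log_pow_le α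
  set G : ℝ → EE → ℝ := fun t x => t ^ (d-1) * (f (t • x) * χ x) with hG
  have hGs : ContDiff ℝ (⊤ : ℕ∞) (Function.uncurry G) := by
    have h1 : ContDiff ℝ (⊤ : ℕ∞) (fun q : ℝ × EE => f (q.1 • q.2)) :=
      hf.1.comp (contDiff_fst.smul contDiff_snd)
    exact (contDiff_fst.pow (d-1)).mul (h1.mul (hχ.comp contDiff_snd))
  have hτ : Integrable (fun t : ℝ => t ^ (-3/2 : ℝ)) (volume.restrict (Set.Ioi 1)) :=
    integrableOn_Ioi_rpow_of_lt (by norm_num) one_pos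
  have hlogK : ∀ (x : EE) (m : ℕ), 1 ≤ m → Real.log (‖x‖ + 2) ^ α / (‖x‖ + 2) ^ m ≤ K := by
    intro x m hm
    have hx0 := norm_nonneg x
    have hl := Real.log_nonneg (show 1 ≤ ‖x‖ + 2 by linarith)
    rw [div_le_iff₀ (by positivity)]
    calc Real.log (‖x‖ + 2) ^ α ≤ (1 + 2 * Real.log (‖x‖ + 2)) ^ α := by gcongr; linarith
      _ ≤ K * (‖x‖ + 2) ^ (1/2 : ℝ) := hK _ (by linarith)
      _ ≤ K * (‖x‖ + 2) ^ (m : ℝ) := by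
          gcongr
          · linarith
          · have : (1:ℝ) ≤ m := by exact_mod_cast hm
            linarith
      _ = _ := by rw [Real.rpow_natCast]
  obtain ⟨hhs, hhi⟩ := integral_lemma hGs (μ := volume.restrict (Set.Ioi 1))
    (fun n t => t ^ (-3/2 : ℝ) * (D n * K)) (fun n => hτ.mul_const _) (by
      intro n
      filter_upwards [ae_restrict_mem measurableSet_Ioi] with t ht x
      have ht1 : (1:ℝ) < t := ht
      refine (hD n t ht1.le x).trans ?_
      rw [mul_div_assoc]
      have := hD0 n
      have := hlogK x (d + p + 1 + n) (by omega)
      gcongr)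
  set h : EE → ℝ := fun x => ∫ t in Set.Ioi 1, G t x with hh
  set I : ℝ := ∫ t in Set.Ioi (1:ℝ), t ^ (-3/2 : ℝ) with hI
  have hI0 : 0 ≤ I := setIntegral_nonneg measurableSet_Ioi fun t ht => by
    have : (1:ℝ) < t := ht
    positivity
  have hhb : ∀ n x, ‖iteratedFDeriv ℝ n h x‖ ≤
      I * (D n * Real.log (‖x‖ + 2) ^ α / (‖x‖ + 2) ^ (d + p + 1 + n)) := by
    intro n x
    rw [hhi n x, hI, ← integral_mul_const]
    refine norm_integral_le_of_norm_le (hτ.mul_const _) ?_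
    filter_upwards [ae_restrict_mem measurableSet_Ioi] with t ht
    exact hD n t (le_of_lt ht) x
  let L : Fin d → EE →L[ℝ] ℝ := fun a => -(EuclideanSpace.proj a)
  refine ⟨fun a x => L a x * h x, fun a => ⟨(L a).contDiff.mul hhs, fun n => ?_⟩, fun x hx => ?_⟩
  · refine ⟨2 ^ n * ‖L a‖ * (I * PK D n), fun x => ?_⟩
    have hx0 := norm_nonneg x
    have hl := Real.log_nonneg (show 1 ≤ ‖x‖ + 2 by linarith)
    refine (prod_bound (A := ‖L a‖ * (‖x‖ + 2))
      (B := I * (PK D n * Real.log (‖x‖ + 2) ^ α / (‖x‖ + 2) ^ (d + p + 1))) (L a).contDiff hhs (by positivity)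
      (show 0 < ‖x‖ + 2 by positivity) (fun i _ => clm_iter (L a) i x) (fun i hi => ?_)).trans (le_of_eq ?_)
    · refine (hhb i x).trans ?_
      rw [pow_add _ _ i, ← div_div, mul_div_assoc I]
      gcongr
      exact le_PK D hi
    · rw [pow_add _ (d + p) n, pow_succ _ (d + p)]
      field_simp
  · have hG1 : ∀ y, ρ ≤ ‖y‖ → ∀ t, G t y = t ^ (d-1) * f (t • y) := by
      intro y hy t; simp [hG, hχ1 y hy]
    have hrad := radial_deriv hd hf.1 hhs hρ (fun y hy => by
        have : (fun t : ℝ => t ^ (d-1) * f (t • y)) = fun t => G t y := by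
          funext t; rw [hG1 y hy]
        rw [this]
        refine Integrable.mono' (hτ.mul_const (D 0 * K)) ?_ ?_
        · exact (hGs.continuous.comp (continuous_id.prodMk continuous_const)).aestronglyMeasurable
        · filter_upwards [ae_restrict_mem measurableSet_Ioi] with t ht
          have ht1 : (1:ℝ) < t := ht
          have := hD 0 t ht1.le y
          rw [norm_iteratedFDeriv_zero] at this
          refine this.trans ?_
          rw [mul_div_assoc]
          have := hD0 0
          have := hlogK y (d + p + 1 + 0) (by omega)
          gcongr)
      (fun y hy => by rw [hh]; simp only [hG1 y hy]) hx
    have hpd : ∀ a, pd (EuclideanSpace.single a 1) (fun x => L a x * h x) x =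
        -(h x + x a * fderiv ℝ h x (EuclideanSpace.single a 1)) := by
      intro a
      have g1 : HasFDerivAt (fun y => L a y) (L a) x := (L a).hasFDerivAt
      have g2 : HasFDerivAt h (fderiv ℝ h x) x := ((hhs.differentiable (by norm_num)) x).hasFDerivAt
      unfold pd
      rw [(g1.fun_mul g2).fderiv]
      simp [L]
    rw [Finset.sum_congr rfl fun a _ => hpd a, Finset.sum_neg_distrib, Finset.sum_add_distrib]
    have : fderiv ℝ h x x = ∑ a, x a * fderiv ℝ h x (EuclideanSpace.single a 1) := by
      conv_lhs => rw [← sum_coord_single x]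
      rw [map_sum]
      simp [sum_coord_single x]
    rw [← this]
    simp
    linarith

theorem SymG.pd_SymG {P α : ℕ} {U : EE → ℝ} (hU : SymG P α U) (v : EE) : SymG (P+1) α (pd v U) := by
  refine ⟨pd_contDiff hU.1 v, fun n hn => ?_⟩
  obtain ⟨C, hC⟩ := hU.2 (n+1) (by omega)
  refine ⟨‖v‖ * C, fun x => (norm_iter_pd_le hU.1 v n x).trans ?_⟩
  rw [mul_assoc, mul_div_assoc, show P + 1 + n - 2 = P + (n + 1) - 2 by omega]
  gcongr
  exact hC x

theorem SymG.sum {ι : Type*} (s : Finset ι) {P α : ℕ} {U : ι → EE → ℝ} (hU : ∀ i, SymG P α (U i)) :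
    SymG P α (fun x => ∑ i ∈ s, U i x) := by
  refine ⟨ContDiff.sum fun i _ => (hU i).1, fun n hn => ?_⟩
  choose C hC using fun i => (hU i).2 n hn
  refine ⟨∑ i ∈ s, C i, fun x => (norm_iter_sum_le s (fun i => (hU i).1) n x).trans ?_⟩
  rw [Finset.sum_mul, Finset.sum_div]
  exact Finset.sum_le_sum fun i _ => hC i x

theorem HH_pd (C : Fin N → Fin d → Fin N → Fin d → ℝ) {u : Fin N → EE → ℝ}
    (hu : ∀ j, ContDiff ℝ (⊤ : ℕ∞) (u j)) (v : EE) (i : Fin N) (x : EE) :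
    HH C (fun j => pd v (u j)) i x = pd v (HH C u i) x := by
  have h2 : ∀ a b j, ContDiff ℝ (⊤ : ℕ∞) (pd (EuclideanSpace.single a 1) (pd (EuclideanSpace.single b 1) (u j))) :=
    fun a b j => pd_contDiff (pd_contDiff (hu j) _) _
  have hdf : ∀ a b j, HasFDerivAt (pd (EuclideanSpace.single a 1) (pd (EuclideanSpace.single b 1) (u j)))
      (fderiv ℝ (pd (EuclideanSpace.single a 1) (pd (EuclideanSpace.single b 1) (u j))) x) x := fun a b j =>
    (((h2 a b j).differentiable (by norm_num)) x).hasFDerivAt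
  have h3 : HasFDerivAt (HH C u i) (-(∑ a, ∑ j, ∑ b, C i a j b •
      fderiv ℝ (pd (EuclideanSpace.single a 1) (pd (EuclideanSpace.single b 1) (u j))) x)) x := by
    unfold HH
    exact HasFDerivAt.fun_neg (HasFDerivAt.fun_sum fun a _ => HasFDerivAt.fun_sum fun j _ =>
      HasFDerivAt.fun_sum fun b _ => (hdf a b j).const_mul _)
  have h4 : pd v (HH C u i) x = -(∑ a, ∑ j, ∑ b, C i a j b *
      pd v (pd (EuclideanSpace.single a 1) (pd (EuclideanSpace.single b 1) (u j))) x) := by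
    conv_lhs => unfold pd
    rw [h3.fderiv]
    simp [pd]
  rw [h4]
  unfold HH
  congr 1
  refine Finset.sum_congr rfl fun a _ => Finset.sum_congr rfl fun j _ => Finset.sum_congr rfl fun b _ => ?_
  rw [pd_comm (hu j) _ v, pd_comm (pd_contDiff (hu j) _) _ v]

theorem solve_all (hd : 2 ≤ d) (C : Fin N → Fin d → Fin N → Fin d → ℝ)
    (hLH : ∀ (ξ : Fin N → ℝ) (η : Fin d → ℝ), ξ ≠ 0 → η ≠ 0 →
      0 < ∑ i, ∑ a, ∑ j, ∑ b, C i a j b * ξ i * η a * ξ j * η b)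
    {ρ : ℝ} (hρ : 0 < ρ) (α p : ℕ) : ∀ (f : Fin N → EE → ℝ), (∀ i, Sym (d + p) α (f i)) →
    ∃ u : Fin N → EE → ℝ, (∀ j, SymG (d + p) (α+1) (u j)) ∧ ∀ i x, ρ < ‖x‖ → HH C u i x = f i x := by
  induction p with
  | zero =>
    intro f hf
    obtain ⟨u, h1, h2⟩ := base_solve hd C hLH α f hf
    exact ⟨u, h1, fun i x _ => h2 i x⟩
  | succ p ih =>
    intro f hf
    choose F hF hFf using fun i => divergence_form hd (hf i) hρ
    choose U hU hUF using fun a => ih (fun i => F i a) (fun i => hF i a)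
    refine ⟨fun j x => ∑ a, pd (EuclideanSpace.single a 1) (U a j) x,
      fun j => SymG.sum _ fun a => (hU a j).pd_SymG _, fun i x hx => ?_⟩
    rw [HH_sum C Finset.univ (u := fun a j => pd (EuclideanSpace.single a 1) (U a j))
      (fun a j => pd_contDiff (hU a j).1 _), ← hFf i x hx]
    refine Finset.sum_congr rfl fun a _ => ?_
    rw [HH_pd C (fun j => (hU a j).1)]
    unfold pd
    have : HH C (U a) i =ᶠ[𝓝 x] F i a := by
      filter_upwards [(isOpen_lt continuous_const continuous_norm).mem_nhds hx] with y hy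
      exact hUF a i y hy
    rw [this.fderiv_eq]

end step


section transfer
variable {d N : ℕ}
local notation "EE" => EuclideanSpace ℝ (Fin d)

/-- The identification of the Euclidean space with plain tuples. -/
def eqv (d : ℕ) : EuclideanSpace ℝ (Fin d) ≃L[ℝ] (Fin d → ℝ) := EuclideanSpace.equiv (Fin d) ℝ

theorem enorm_eqv (x : EE) : enorm (eqv d x) = ‖x‖ := by
  rw [EuclideanSpace.norm_eq]
  simp [enorm, eqv]

theorem norm_eqv_symm (x : Vec d) : ‖(eqv d).symm x‖ = enorm x := by
  rw [← enorm_eqv, ContinuousLinearEquiv.apply_symm_apply]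

theorem enorm_continuous : Continuous (enorm : Vec d → ℝ) := by
  unfold enorm; fun_prop

theorem eqv_symm_single (a : Fin d) : (eqv d).symm (Pi.single a 1) = EuclideanSpace.single a 1 := by
  rw [ContinuousLinearEquiv.symm_apply_eq]
  ext i
  simp [eqv, Pi.single_apply]

theorem iter_comp_right {E F G : Type*} [NormedAddCommGroup E] [NormedSpace ℝ E] [NormedAddCommGroup F]
    [NormedSpace ℝ F] [NormedAddCommGroup G] [NormedSpace ℝ G] (g : G ≃L[ℝ] E) (f : E → F) (x : G) (n : ℕ) :
    iteratedFDeriv ℝ n (f ∘ g) x = (iteratedFDeriv ℝ n f (g x)).compContinuousLinearMap fun _ => g := by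
  have := g.iteratedFDerivWithin_comp_right f uniqueDiffOn_univ (Set.mem_univ (g x)) n
  rw [Set.preimage_univ, iteratedFDerivWithin_univ, iteratedFDerivWithin_univ] at this
  exact this

theorem norm_iter_comp_right {E F G : Type*} [NormedAddCommGroup E] [NormedSpace ℝ E] [NormedAddCommGroup F]
    [NormedSpace ℝ F] [NormedAddCommGroup G] [NormedSpace ℝ G] (g : G ≃L[ℝ] E) (f : E → F) (x : G) (n : ℕ) :
    ‖iteratedFDeriv ℝ n (f ∘ g) x‖ ≤ ‖(g : G →L[ℝ] E)‖ ^ n * ‖iteratedFDeriv ℝ n f (g x)‖ := by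
  rw [iter_comp_right]
  refine (ContinuousMultilinearMap.norm_compContinuousLinearMap_le _ _).trans (le_of_eq ?_)
  simp [mul_comm]

theorem exterior_uniqueDiffOn {R : ℝ} (hR : 0 < R) : UniqueDiffOn ℝ {y : Vec d | R ≤ enorm y} := by
  intro x hx
  have hx : R ≤ enorm x := hx
  have hxn : enorm x ^ 2 = ∑ i, x i * x i := by
    unfold enorm
    rw [Real.sq_sqrt (Finset.sum_nonneg fun i _ => sq_nonneg _)]
    exact Finset.sum_congr rfl fun i _ => sq _
  have hpos : 0 < enorm x := hR.trans_le hx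
  let l : Vec d →L[ℝ] ℝ := ∑ i, x i • ContinuousLinearMap.proj (R := ℝ) (φ := fun _ : Fin d => ℝ) i
  have hl : ∀ y, l y = ∑ i, x i * y i := by
    intro y; simp [l]
  have hsub : {y | enorm x ^ 2 ≤ l y} ⊆ {y : Vec d | R ≤ enorm y} := by
    intro y hy
    have hy : enorm x ^ 2 ≤ l y := hy
    rw [hl] at hy
    have hcs := Finset.sum_mul_sq_le_sq_mul_sq Finset.univ x y
    have e2 : ∀ z : Vec d, ∑ i, z i ^ 2 = enorm z ^ 2 := fun z => by
      unfold enorm; rw [Real.sq_sqrt (Finset.sum_nonneg fun i _ => sq_nonneg _)]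
    rw [e2, e2, ← mul_pow] at hcs
    have hy0 : 0 ≤ enorm y := Real.sqrt_nonneg _
    have h3 := abs_le_of_sq_le_sq hcs (by positivity)
    have h4 : enorm x ^ 2 ≤ enorm x * enorm y := hy.trans ((le_abs_self _).trans h3)
    show R ≤ enorm y
    nlinarith
  have hcv : Convex ℝ {y | enorm x ^ 2 ≤ l y} := convex_halfSpace_ge l.toLinearMap.isLinear _
  refine (uniqueDiffWithinAt_convex hcv ?_ (subset_closure ?_)).mono hsub
  · have ho : IsOpen {y | enorm x ^ 2 < l y} := isOpen_lt continuous_const l.continuous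
    have hsub2 : {y | enorm x ^ 2 < l y} ⊆ {y | enorm x ^ 2 ≤ l y} :=
      fun y (hy : enorm x ^ 2 < l y) => show enorm x ^ 2 ≤ l y from hy.le
    refine ⟨(2:ℝ) • x, interior_maximal hsub2 ho ?_⟩
    show enorm x ^ 2 < l ((2:ℝ) • x)
    rw [map_smul, hl, ← hxn, smul_eq_mul]
    nlinarith [pow_pos hpos 2]
  · show enorm x ^ 2 ≤ l x
    rw [hl, hxn]

theorem Sym_of_exterior {P α : ℕ} {f : EE → ℝ} (hf : ContDiff ℝ (⊤ : ℕ∞) f) {b : ℝ} (hb : 0 < b)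
    (h : ∀ n, ∃ C : ℝ, ∀ x, b < ‖x‖ → ‖iteratedFDeriv ℝ n f x‖ ≤
      C * Real.log (‖x‖ + 2) ^ α / (‖x‖ + 2) ^ (P + n)) : Sym P α f := by
  refine ⟨hf, fun n => ?_⟩
  obtain ⟨C, hC⟩ := h n
  have hc : Continuous (iteratedFDeriv ℝ n f) := hf.continuous_iteratedFDeriv (by exact_mod_cast le_top)
  obtain ⟨D, hD⟩ := (isCompact_closedBall (0:EE) b).exists_bound_of_continuousOn hc.continuousOn
  have hD0 : 0 ≤ D := (norm_nonneg _).trans (hD 0 (by simp [hb.le]))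
  have hl2 : 0 < Real.log 2 := Real.log_pos (by norm_num)
  refine ⟨D * (b + 2) ^ (P + n) / Real.log 2 ^ α + |C|, fun x => ?_⟩
  have hx0 := norm_nonneg x
  have hll : Real.log 2 ≤ Real.log (‖x‖ + 2) := Real.log_le_log (by norm_num) (by linarith)
  have hl : 0 < Real.log (‖x‖ + 2) := hl2.trans_le hll
  rcases le_or_gt ‖x‖ b with hx | hx
  · calc ‖iteratedFDeriv ℝ n f x‖ ≤ D := hD x (by simpa using hx)
      _ = (D * (‖x‖ + 2) ^ (P + n) / Real.log 2 ^ α) * Real.log 2 ^ α / (‖x‖ + 2) ^ (P + n) := by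
        field_simp
      _ ≤ (D * (b + 2) ^ (P + n) / Real.log 2 ^ α) * Real.log (‖x‖ + 2) ^ α / (‖x‖ + 2) ^ (P + n) := by
        gcongr
      _ ≤ _ := by
        gcongr
        linarith [abs_nonneg C]
  · refine (hC x hx).trans ?_
    gcongr
    have : 0 ≤ D * (b + 2) ^ (P + n) / Real.log 2 ^ α := by positivity
    linarith [le_abs_self C]

theorem norm_iter_pi_le {u : Vec d → Vec N} (hu : ContDiff ℝ (⊤ : ℕ∞) u) (n : ℕ) (x : Vec d) :
    ‖iteratedFDeriv ℝ n u x‖ ≤ ∑ j, ‖iteratedFDeriv ℝ n (fun y => u y j) x‖ := by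
  refine ContinuousMultilinearMap.opNorm_le_bound (Finset.sum_nonneg fun _ _ => norm_nonneg _) fun m => ?_
  refine (pi_norm_le_iff_of_nonneg (by positivity)).2 fun j => ?_
  have h1 := (ContinuousLinearMap.proj (R := ℝ) (φ := fun _ : Fin N => ℝ) j).iteratedFDeriv_comp_left
    (f := u) (x := x) (n := (⊤ : ℕ∞)) (i := n) hu.contDiffAt (by exact_mod_cast le_top)
  have h2 : iteratedFDeriv ℝ n u x m j = iteratedFDeriv ℝ n (fun y => u y j) x m := by
    change _ = iteratedFDeriv ℝ n (⇑(ContinuousLinearMap.proj (R := ℝ) (φ := fun _ : Fin N => ℝ) j) ∘ u) x m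
    rw [h1]; rfl
  rw [h2]
  refine (ContinuousMultilinearMap.le_opNorm _ _).trans ?_
  gcongr
  exact Finset.single_le_sum (f := fun j => ‖iteratedFDeriv ℝ n (fun y => u y j) x‖)
    (fun _ _ => norm_nonneg _) (Finset.mem_univ j)

theorem cutoff_extension {R₀ : ℝ} (hR₀ : 0 < R₀) {p α : ℕ} {f : Vec d → Vec N}
    (hf : ContDiffOn ℝ (⊤ : ℕ∞) f {x : Vec d | R₀ / 2 ≤ enorm x})
    (hfb : ∀ j : ℕ, ∃ Cj : ℝ, ∀ x : Vec d, R₀ / 2 ≤ enorm x →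
      ‖iteratedFDerivWithin ℝ j f {y : Vec d | R₀ / 2 ≤ enorm y} x‖ ≤
        Cj * ang x ^ (-(d : ℝ) - p - j) * Real.log (ang x) ^ α) :
    ∃ F : Fin N → EE → ℝ, (∀ i, Sym (d + p) α (F i)) ∧
      ∀ i x, R₀ ≤ ‖x‖ → F i x = f (eqv d x) i := by
  obtain ⟨χ, hχ, hχ0, hχ1, -⟩ := cutoff_one (d := d) (a := 3/4 * R₀) (b := 7/8 * R₀) (by positivity) (by linarith)
  have hnhds : ∀ x : EE, R₀ / 2 < ‖x‖ → {y : Vec d | R₀ / 2 ≤ enorm y} ∈ 𝓝 (eqv d x) := by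
    intro x hx
    refine Filter.mem_of_superset ((isOpen_lt continuous_const enorm_continuous).mem_nhds
      (show R₀ / 2 < enorm (eqv d x) by rwa [enorm_eqv])) fun y (hy : R₀ / 2 < enorm y) => show R₀ / 2 ≤ enorm y from hy.le
  have hfat : ∀ x : EE, R₀ / 2 < ‖x‖ → ContDiffAt ℝ (⊤ : ℕ∞) (f ∘ eqv d) x := fun x hx =>
    (hf.contDiffAt (hnhds x hx)).comp x (eqv d).contDiff.contDiffAt
  have hfati : ∀ i, ∀ x : EE, R₀ / 2 < ‖x‖ → ContDiffAt ℝ (⊤ : ℕ∞) (fun x => f (eqv d x) i) x := fun i x hx =>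
    contDiffAt_pi.1 (hfat x hx) i
  refine ⟨fun i x => χ x * f (eqv d x) i, fun i => Sym_of_exterior (b := 7/8 * R₀) ?_ (by positivity) ?_, ?_⟩
  · rw [contDiff_iff_contDiffAt]
    intro x
    rcases lt_or_ge ‖x‖ (3/4 * R₀) with hx | hx
    · have : (fun x => χ x * f (eqv d x) i) =ᶠ[𝓝 x] fun _ => 0 := by
        filter_upwards [(isOpen_lt continuous_norm continuous_const).mem_nhds hx] with y hy
        rw [hχ0 y (le_of_lt hy), zero_mul]
      exact contDiffAt_const.congr_of_eventuallyEq this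
    · exact hχ.contDiffAt.mul (hfati i x (by linarith))
  · intro n
    obtain ⟨C, hC⟩ := hfb n
    set M := ‖(eqv d : EE →L[ℝ] (Fin d → ℝ))‖ ^ n with hM
    set Lp := ‖ContinuousLinearMap.proj (R := ℝ) (φ := fun _ : Fin N => ℝ) i‖ with hLp
    refine ⟨Lp * (M * C), fun x hx => ?_⟩
    have hx2 : R₀ / 2 < ‖x‖ := by linarith
    have hev : (fun x => χ x * f (eqv d x) i) =ᶠ[𝓝 x] fun x => f (eqv d x) i := by
      filter_upwards [(isOpen_lt continuous_const continuous_norm).mem_nhds hx] with y hy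
      rw [hχ1 y (le_of_lt hy), one_mul]
    rw [(hev.iteratedFDeriv ℝ n).eq_of_nhds]
    have h1 := (ContinuousLinearMap.proj (R := ℝ) (φ := fun _ : Fin N => ℝ) i).norm_iteratedFDeriv_comp_left
      (hfat x hx2) (n := n) (by exact_mod_cast le_top)
    have h2 := norm_iter_comp_right (eqv d) f x n
    have h3 := hC (eqv d x) (by rw [enorm_eqv]; exact hx2.le)
    have h4 : iteratedFDerivWithin ℝ n f {y : Vec d | R₀ / 2 ≤ enorm y} (eqv d x) =
        iteratedFDeriv ℝ n f (eqv d x) := by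
      rw [← iteratedFDerivWithin_univ]
      exact iteratedFDerivWithin_congr_set (Filter.eventuallyEq_univ.mpr (hnhds x hx2)) n
    have hang : ang (eqv d x) = ‖x‖ + 2 := by rw [ang, enorm_eqv]
    rw [h4, hang] at h3
    have hp : 0 < ‖x‖ + 2 := by positivity
    have h5 : (‖x‖ + 2) ^ (-(d : ℝ) - p - n) = 1 / (‖x‖ + 2) ^ (d + p + n) := by
      rw [← Real.rpow_natCast, one_div, ← Real.rpow_neg hp.le]
      congr 1; push_cast; ring
    rw [h5] at h3
    refine h1.trans ?_
    calc Lp * ‖iteratedFDeriv ℝ n (f ∘ ⇑(eqv d)) x‖ ≤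
          Lp * (M * (C * (1 / (‖x‖ + 2) ^ (d + p + n)) * Real.log (‖x‖ + 2) ^ α)) := by
            gcongr
            refine h2.trans ?_
            gcongr
      _ = _ := by ring
  · intro i x hx
    show χ x * f (eqv d x) i = f (eqv d x) i
    rw [hχ1 x (by linarith), one_mul]

end transfer

/-- Proposition: exterior solvability with decay for
continuum linear elasticity. -/
theorem exterior_solvability_linear_elasticity
    (d N : ℕ) (hd : 2 ≤ d) (hN : 1 ≤ N)
    (CBt : Fin N → Fin d → Fin N → Fin d → ℝ)
    (hCBsym : ∀ i a j b, CBt i a j b = CBt j b i a)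
    (c₀ : ℝ) (hc₀ : 0 < c₀)
    (hLH : ∀ (ξ : Vec N) (η : Vec d),
      c₀ * (enorm ξ) ^ 2 * (enorm η) ^ 2 ≤
        ∑ i, ∑ a, ∑ j, ∑ b, CBt i a j b * ξ i * η a * ξ j * η b)
    (p α : ℕ) (R₀ : ℝ) (hR₀ : 0 < R₀)
    (f : Vec d → Vec N)
    (hf : ContDiffOn ℝ (⊤ : ℕ∞) f {x : Vec d | R₀ / 2 ≤ enorm x})
    (hfb : ∀ j : ℕ, ∃ Cj : ℝ, ∀ x : Vec d, R₀ / 2 ≤ enorm x →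
      ‖iteratedFDerivWithin ℝ j f {y : Vec d | R₀ / 2 ≤ enorm y} x‖ ≤
        Cj * ang x ^ (-(d : ℝ) - p - j) * Real.log (ang x) ^ α) :
    ∃ u : Vec d → Vec N,
      ContDiffOn ℝ (⊤ : ℕ∞) u {x : Vec d | R₀ ≤ enorm x} ∧
      (∀ x : Vec d, R₀ ≤ enorm x → ∀ i : Fin N,
        -(∑ a : Fin d, ∑ j : Fin N, ∑ b : Fin d, CBt i a j b *
            iteratedFDerivWithin ℝ 2 (fun y => u y j) {y : Vec d | R₀ ≤ enorm y} x
              ![Pi.single a 1, Pi.single b 1]) = f x i) ∧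
      (∀ j : ℕ, 1 ≤ j → ∃ Cj : ℝ, ∀ x : Vec d, R₀ ≤ enorm x →
        ‖iteratedFDerivWithin ℝ j u {y : Vec d | R₀ ≤ enorm y} x‖ ≤
          Cj * ang x ^ ((2 : ℝ) - d - p - j) * Real.log (ang x) ^ (α + 1)) := by
  have hpos : ∀ {n : ℕ} (v : Vec n), v ≠ 0 → 0 < enorm v := by
    intro n v hv
    rw [← norm_eqv_symm, norm_pos_iff]
    simpa using hv
  have hLH' : ∀ (ξ : Fin N → ℝ) (η : Fin d → ℝ), ξ ≠ 0 → η ≠ 0 →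
      0 < ∑ i, ∑ a, ∑ j, ∑ b, CBt i a j b * ξ i * η a * ξ j * η b := by
    intro ξ η hξ hη
    refine lt_of_lt_of_le ?_ (hLH ξ η)
    have := hpos ξ hξ
    have := hpos η hη
    positivity
  obtain ⟨F, hF, hFf⟩ := cutoff_extension hR₀ hf hfb
  obtain ⟨U, hU, hUF⟩ := solve_all hd CBt hLH' (half_pos hR₀) α p F hF
  have huj : ∀ j, ContDiff ℝ (⊤ : ℕ∞) (U j ∘ (eqv d).symm) := fun j =>
    (hU j).1.comp (eqv d).symm.contDiff
  have hu : ContDiff ℝ (⊤ : ℕ∞) (fun (y : Vec d) (j : Fin N) => U j ((eqv d).symm y)) :=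
    contDiff_pi.2 huj
  have hud := exterior_uniqueDiffOn (d := d) hR₀
  refine ⟨fun y j => U j ((eqv d).symm y), hu.contDiffOn, fun x hx i => ?_, fun n hn => ?_⟩
  · have h1 := hUF i ((eqv d).symm x) (by rw [norm_eqv_symm]; linarith)
    rw [hFf i _ (by rw [norm_eqv_symm]; exact hx), ContinuousLinearEquiv.apply_symm_apply] at h1
    rw [← h1]
    unfold HH
    congr 1
    refine Finset.sum_congr rfl fun a _ => Finset.sum_congr rfl fun j _ => Finset.sum_congr rfl fun b _ => ?_
    congr 1
    change iteratedFDerivWithin ℝ 2 (U j ∘ (eqv d).symm) {y : Vec d | R₀ ≤ enorm y} x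
      ![Pi.single a 1, Pi.single b 1] = _
    rw [iteratedFDerivWithin_eq_iteratedFDeriv hud
      ((huj j).contDiffAt.of_le (WithTop.coe_le_coe.2 le_top)) hx, pd_pd_eq_iter (hU j).1]
    have h2 := iter_comp_right (eqv d).symm (U j) x 2
    change iteratedFDeriv ℝ 2 (U j ∘ (eqv d).symm) x _ = _
    rw [h2, ContinuousMultilinearMap.compContinuousLinearMap_apply]
    congr 1
    ext k : 1
    fin_cases k
    · exact eqv_symm_single a
    · exact eqv_symm_single b
  · choose C hC using fun j => (hU j).2 n hn
    set M := ‖((eqv d).symm : (Fin d → ℝ) →L[ℝ] EuclideanSpace ℝ (Fin d))‖ ^ n with hM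
    refine ⟨∑ j, M * C j, fun x hx => ?_⟩
    rw [iteratedFDerivWithin_eq_iteratedFDeriv hud
      (hu.contDiffAt.of_le (by exact_mod_cast le_top)) hx]
    refine (norm_iter_pi_le hu n x).trans ?_
    rw [Finset.sum_mul, Finset.sum_mul]
    refine Finset.sum_le_sum fun j _ => ?_
    refine (norm_iter_comp_right (eqv d).symm (U j) x n).trans ?_
    have h3 := hC j ((eqv d).symm x)
    rw [norm_eqv_symm] at h3
    change _ ≤ C j * Real.log (ang x) ^ (α + 1) / ang x ^ (d + p + n - 2) at h3
    have hp : 0 < ang x := by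
      have : 0 ≤ enorm x := Real.sqrt_nonneg _
      unfold ang; linarith
    have h5 : ang x ^ ((2 : ℝ) - d - p - n) = 1 / ang x ^ (d + p + n - 2) := by
      rw [← Real.rpow_natCast, one_div, ← Real.rpow_neg hp.le, Nat.cast_sub (by omega)]
      congr 1; push_cast; ring
    rw [h5]
    calc _ ≤ M * (C j * Real.log (ang x) ^ (α + 1) / ang x ^ (d + p + n - 2)) := by gcongr
      _ = _ := by ring

end Defect
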